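/- arXiv:1702.07062 — 3 statements merged into one kernel-verified Lean document; each statement's English description precedes it below -/
import Mathlib

section
/- Let α, β ∈ (0,5) with α + β > 5. Then there exists a constant C such that for all ν, ∫_E |μ|_*^{-α} |ν - μ|_*^{-β} dμ ≤ C |ν|_*^{-α-β+5}, where E = R × Z^3 with measure dσ × counting measure, and |μ|_* = 1 + |σ|^{1/2} + |k| for μ = (σ,k). -/
open MeasureTheory
open scoped ENNReal

noncomputable section

/-- The parabolic weight `|μ|_* = 1 + |σ|^{1/2} + |k|` on `E = ℝ × ℤ³`. -/
def pweight (μ : ℝ × (Fin 3 → ℤ)) : ℝ :=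
  1 + Real.sqrt |μ.1| + Real.sqrt (∑ i, ((μ.2 i : ℝ)) ^ 2)

/-- The measure on `E = ℝ × ℤ³`: Lebesgue measure times counting measure. -/
def Emeasure : Measure (ℝ × (Fin 3 → ℤ)) :=
  (volume : Measure ℝ).prod Measure.count

/-!
Only the growth `m {w ≤ R} ≤ A * R ^ d` of the balls of the weight matters; for the parabolic
weight `d = 5`, since `σ` counts twice and each coordinate of `k` once. By the layer cake formula,
the integral of `w ^ (-γ)` is at most of order `r ^ (d - γ)` over `{w ≤ r}` when `γ < d`, and over
`{r < w}` when `d < γ`. With `r = |ν|_* / 2`, the triangle inequality shows that the larger of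
`a = |μ|_*` and `b = |ν - μ|_*` is at least `r`, so
`a ^ (-α) * b ^ (-β) ≤ a ^ (-α) * max a r ^ (-β) + b ^ (-β) * max b r ^ (-α)`.
Each summand involves a single weight: the first is `r ^ (-β) * a ^ (-α)` for `a ≤ r`, with
exponent `α < d`, and `a ^ (-(α + β))` for `r < a`, with exponent `α + β > d`.
-/

lemma lintegral_Ioc_rpow {p a : ℝ} (hp : -1 < p) (ha : 0 ≤ a) :
    ∫⁻ t in Set.Ioc 0 a, ENNReal.ofReal (t ^ p) = ENNReal.ofReal (a ^ (p + 1) / (p + 1)) := by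
  have hint : IntegrableOn (fun t : ℝ => t ^ p) (Set.Ioc 0 a) :=
    (intervalIntegrable_iff_integrableOn_Ioc_of_le ha).1
      (intervalIntegral.intervalIntegrable_rpow' hp)
  rw [← ofReal_integral_eq_lintegral_ofReal hint
    (ae_restrict_of_forall_mem measurableSet_Ioc fun t ht => Real.rpow_nonneg ht.1.le p),
    ← intervalIntegral.integral_of_le ha, integral_rpow (Or.inl hp),
    Real.zero_rpow (by linarith), sub_zero]

lemma lintegral_Ioi_rpow {p a : ℝ} (hp : p < -1) (ha : 0 < a) :
    ∫⁻ t in Set.Ioi a, ENNReal.ofReal (t ^ p) = ENNReal.ofReal (-a ^ (p + 1) / (p + 1)) := by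
  rw [← ofReal_integral_eq_lintegral_ofReal (integrableOn_Ioi_rpow_of_lt hp ha)
    (ae_restrict_of_forall_mem measurableSet_Ioi fun t ht =>
      Real.rpow_nonneg (ha.trans ht).le p), integral_Ioi_rpow_of_lt hp ha]

section WeightGrowth

variable {X : Type*} [MeasurableSpace X] {m : Measure X} {u v w : X → ℝ} {A : ℝ≥0∞}
  {d α β γ r : ℝ}

/-- Polynomial volume growth of order `d` for the balls `{w ≤ R}` of a weight `w`: this is all that
the convolution estimate needs to know about the underlying space. -/
def HasPolynomialGrowth (m : Measure X) (w : X → ℝ) (A : ℝ≥0∞) (d : ℝ) : Prop :=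
  ∀ ⦃R : ℝ⦄, 0 < R → m {x | w x ≤ R} ≤ A * ENNReal.ofReal (R ^ d)

lemma HasPolynomialGrowth.comp_measurePreserving (h : HasPolynomialGrowth m w A d)
    (hw : Measurable w) {Y : Type*} [MeasurableSpace Y] {m' : Measure Y} {φ : Y → X}
    (hφ : MeasurePreserving φ m' m) : HasPolynomialGrowth m' (w ∘ φ) A d := fun _ hR =>
  (hφ.measure_preimage (measurableSet_le hw measurable_const).nullMeasurableSet).trans_le (h hR)

lemma lintegral_rpow_neg_eq_lintegral_measure_le (m : Measure X) (hw : Measurable w)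
    (hpos : ∀ x, 0 < w x) (hγ : 0 < γ) :
    ∫⁻ x, ENNReal.ofReal (w x ^ (-γ)) ∂m = ENNReal.ofReal γ *
      ∫⁻ t in Set.Ioi (0 : ℝ), m {x | w x ≤ t⁻¹} * ENNReal.ofReal (t ^ (γ - 1)) := by
  simp only [Real.rpow_neg_eq_inv_rpow]
  rw [lintegral_rpow_eq_lintegral_meas_le_mul m (.of_forall fun x => (inv_pos.2 (hpos x)).le)
    hw.inv.aemeasurable hγ]
  congr 1
  refine setLIntegral_congr_fun measurableSet_Ioi fun t ht => ?_
  simp only [le_inv_comm₀ (Set.mem_Ioi.1 ht) (hpos _)]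

lemma HasPolynomialGrowth.measure_le_inv_mul_rpow_le (h : HasPolynomialGrowth m w A d) {t : ℝ}
    (ht : 0 < t) :
    m {x | w x ≤ t⁻¹} * ENNReal.ofReal (t ^ (γ - 1)) ≤ A * ENNReal.ofReal (t ^ (γ - d - 1)) := by
  calc m {x | w x ≤ t⁻¹} * ENNReal.ofReal (t ^ (γ - 1))
      ≤ A * ENNReal.ofReal (t⁻¹ ^ d) * ENNReal.ofReal (t ^ (γ - 1)) := by
        gcongr
        exact h (inv_pos.2 ht)
    _ = A * ENNReal.ofReal (t ^ (γ - d - 1)) := by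
        rw [mul_assoc, ← ENNReal.ofReal_mul (by positivity), ← Real.rpow_neg_eq_inv_rpow,
          ← Real.rpow_add ht]
        ring_nf

lemma HasPolynomialGrowth.setLIntegral_sublevel_rpow_neg_le (h : HasPolynomialGrowth m w A d)
    (hw : Measurable w) (hpos : ∀ x, 0 < w x) (hγ : 0 < γ) (hγd : γ < d) (hr : 0 < r) :
    ∫⁻ x in {x | w x ≤ r}, ENNReal.ofReal (w x ^ (-γ)) ∂m ≤
      A * ENNReal.ofReal (d / (d - γ) * r ^ (d - γ)) := by
  have hr' : 0 < r⁻¹ := inv_pos.2 hr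
  have hdγ : 0 < d - γ := sub_pos.2 hγd
  have hsmall : ∫⁻ t in Set.Ioc 0 r⁻¹,
      m.restrict {x | w x ≤ r} {x | w x ≤ t⁻¹} * ENNReal.ofReal (t ^ (γ - 1)) ≤
        A * ENNReal.ofReal (r ^ (d - γ) / γ) := by
    calc _ ≤ ∫⁻ t in Set.Ioc 0 r⁻¹, A * ENNReal.ofReal (r ^ d) * ENNReal.ofReal (t ^ (γ - 1)) := by
          gcongr
          exact (measure_mono (Set.subset_univ _)).trans
            ((Measure.restrict_apply_univ _).trans_le (h hr))
      _ = A * ENNReal.ofReal (r ^ (d - γ) / γ) := by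
          rw [lintegral_const_mul _ (by fun_prop), lintegral_Ioc_rpow (by linarith) hr'.le,
            mul_assoc, ← ENNReal.ofReal_mul (by positivity), sub_add_cancel,
            ← Real.rpow_neg_eq_inv_rpow, mul_div_assoc', ← Real.rpow_add hr, sub_eq_add_neg]
  have hlarge : ∫⁻ t in Set.Ioi r⁻¹,
      m.restrict {x | w x ≤ r} {x | w x ≤ t⁻¹} * ENNReal.ofReal (t ^ (γ - 1)) ≤
        A * ENNReal.ofReal (r ^ (d - γ) / (d - γ)) := by
    calc _ ≤ ∫⁻ t in Set.Ioi r⁻¹, A * ENNReal.ofReal (t ^ (γ - d - 1)) :=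
          setLIntegral_mono' measurableSet_Ioi fun t ht =>
            (mul_le_mul_left (Measure.restrict_le_self _) _).trans
              (h.measure_le_inv_mul_rpow_le (hr'.trans ht))
      _ = A * ENNReal.ofReal (r ^ (d - γ) / (d - γ)) := by
          rw [lintegral_const_mul _ (by fun_prop), lintegral_Ioi_rpow (by linarith) hr',
            sub_add_cancel, ← Real.rpow_neg_eq_inv_rpow, neg_sub, neg_div, ← div_neg, neg_sub]
  rw [lintegral_rpow_neg_eq_lintegral_measure_le _ hw hpos hγ, ← Set.Ioc_union_Ioi_eq_Ioi hr'.le,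
    lintegral_union measurableSet_Ioi Set.Ioc_disjoint_Ioi_same]
  calc _ ≤ ENNReal.ofReal γ * (A * ENNReal.ofReal (r ^ (d - γ) / γ) +
          A * ENNReal.ofReal (r ^ (d - γ) / (d - γ))) := by gcongr
    _ = A * ENNReal.ofReal (d / (d - γ) * r ^ (d - γ)) := by
        rw [← mul_add, ← ENNReal.ofReal_add (by positivity) (by positivity), mul_left_comm,
          ← ENNReal.ofReal_mul hγ.le]
        congr 2
        field_simp
        ring

lemma HasPolynomialGrowth.setLIntegral_superlevel_rpow_neg_le (h : HasPolynomialGrowth m w A d)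
    (hw : Measurable w) (hpos : ∀ x, 0 < w x) (hγ : 0 < γ) (hdγ : d < γ) (hr : 0 < r) :
    ∫⁻ x in {x | r < w x}, ENNReal.ofReal (w x ^ (-γ)) ∂m ≤
      A * ENNReal.ofReal (γ / (γ - d) * r ^ (d - γ)) := by
  have hr' : 0 < r⁻¹ := inv_pos.2 hr
  have hvanish : ∀ t ∈ Set.Ioi r⁻¹,
      m.restrict {x | r < w x} {x | w x ≤ t⁻¹} * ENNReal.ofReal (t ^ (γ - 1)) = 0 := by
    intro t ht
    have htr : t⁻¹ < r := inv_lt_of_inv_lt₀ hr ht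
    have hempty : {x | w x ≤ t⁻¹} ∩ {x | r < w x} = ∅ :=
      Set.eq_empty_of_forall_notMem fun x hx => (htr.trans hx.2).not_ge hx.1
    rw [Measure.restrict_apply (measurableSet_le hw measurable_const), hempty, measure_empty,
      zero_mul]
  rw [lintegral_rpow_neg_eq_lintegral_measure_le _ hw hpos hγ, ← Set.Ioc_union_Ioi_eq_Ioi hr'.le,
    lintegral_union measurableSet_Ioi Set.Ioc_disjoint_Ioi_same,
    setLIntegral_congr_fun measurableSet_Ioi hvanish, lintegral_zero, add_zero]
  calc _ ≤ ENNReal.ofReal γ * ∫⁻ t in Set.Ioc 0 r⁻¹, A * ENNReal.ofReal (t ^ (γ - d - 1)) := by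
        gcongr ENNReal.ofReal γ * ?_
        exact setLIntegral_mono' measurableSet_Ioc fun t ht =>
          (mul_le_mul_left (Measure.restrict_le_self _) _).trans
            (h.measure_le_inv_mul_rpow_le ht.1)
    _ = A * ENNReal.ofReal (γ / (γ - d) * r ^ (d - γ)) := by
        rw [lintegral_const_mul _ (by fun_prop), lintegral_Ioc_rpow (by linarith) hr'.le,
          sub_add_cancel, ← Real.rpow_neg_eq_inv_rpow, neg_sub, mul_left_comm,
          ← ENNReal.ofReal_mul hγ.le, mul_div_left_comm, mul_comm (r ^ _)]

lemma HasPolynomialGrowth.lintegral_rpow_mul_max_rpow_le (h : HasPolynomialGrowth m w A d)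
    (hw : Measurable w) (hpos : ∀ x, 0 < w x) (hα : 0 < α) (hαd : α < d) (hαβ : d < α + β)
    (hr : 0 < r) :
    ∫⁻ x, ENNReal.ofReal (w x ^ (-α) * max (w x) r ^ (-β)) ∂m ≤
      A * ENNReal.ofReal ((d / (d - α) + (α + β) / (α + β - d)) * r ^ (d - (α + β))) := by
  have hd : 0 < d := hα.trans hαd
  have : 0 < d - α := sub_pos.2 hαd
  have : 0 < α + β - d := sub_pos.2 hαβ
  have hball : MeasurableSet {x | w x ≤ r} := measurableSet_le hw measurable_const
  have hcompl : {x | w x ≤ r}ᶜ = {x | r < w x} := by ext; simp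
  have hnear : ∫⁻ x in {x | w x ≤ r}, ENNReal.ofReal (w x ^ (-α) * max (w x) r ^ (-β)) ∂m ≤
      A * ENNReal.ofReal (d / (d - α) * r ^ (d - (α + β))) := by
    calc _ = ∫⁻ x in {x | w x ≤ r},
            ENNReal.ofReal (r ^ (-β)) * ENNReal.ofReal (w x ^ (-α)) ∂m :=
          setLIntegral_congr_fun hball fun x hx => by
            simp only [max_eq_right (Set.mem_ofPred.1 hx)]
            rw [← ENNReal.ofReal_mul (by positivity), mul_comm]
      _ ≤ ENNReal.ofReal (r ^ (-β)) * (A * ENNReal.ofReal (d / (d - α) * r ^ (d - α))) := by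
          rw [lintegral_const_mul _ (by fun_prop)]
          gcongr
          exact h.setLIntegral_sublevel_rpow_neg_le hw hpos hα hαd hr
      _ = A * ENNReal.ofReal (d / (d - α) * r ^ (d - (α + β))) := by
          rw [mul_left_comm, ← ENNReal.ofReal_mul (by positivity), mul_left_comm,
            ← Real.rpow_add hr]
          ring_nf
  have hfar : ∫⁻ x in {x | r < w x}, ENNReal.ofReal (w x ^ (-α) * max (w x) r ^ (-β)) ∂m ≤
      A * ENNReal.ofReal ((α + β) / (α + β - d) * r ^ (d - (α + β))) := by
    calc _ = ∫⁻ x in {x | r < w x}, ENNReal.ofReal (w x ^ (-(α + β))) ∂m :=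
          setLIntegral_congr_fun (measurableSet_lt measurable_const hw) fun x hx => by
            simp only [max_eq_left (Set.mem_ofPred.1 hx).le, ← Real.rpow_add (hpos x), neg_add]
      _ ≤ _ := h.setLIntegral_superlevel_rpow_neg_le hw hpos (hd.trans hαβ) hαβ hr
  calc _ = _ := (lintegral_add_compl _ hball).symm
    _ ≤ _ := add_le_add hnear (hcompl ▸ hfar)
    _ = _ := by
        have := hd.trans hαβ
        rw [← mul_add, ← ENNReal.ofReal_add (by positivity) (by positivity), ← add_mul]

lemma rpow_neg_mul_rpow_neg_le_add {a b : ℝ} (ha : 0 < a) (hb : 0 < b) (hα : 0 ≤ α) (hβ : 0 ≤ β)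
    (hab : 2 * r ≤ a + b) :
    a ^ (-α) * b ^ (-β) ≤ a ^ (-α) * max a r ^ (-β) + b ^ (-β) * max b r ^ (-α) := by
  rcases le_total a b with hle | hle
  · have hmax : b ^ (-β) ≤ max a r ^ (-β) := Real.rpow_le_rpow_of_nonpos (by positivity)
      (max_le hle (by linarith)) (by linarith)
    exact (mul_le_mul_of_nonneg_left hmax (by positivity)).trans
      (le_add_of_nonneg_right (by positivity))
  · have hmax : a ^ (-α) ≤ max b r ^ (-α) := Real.rpow_le_rpow_of_nonpos (by positivity)
      (max_le hle (by linarith)) (by linarith)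
    rw [mul_comm]
    exact (mul_le_mul_of_nonneg_left hmax (by positivity)).trans
      (le_add_of_nonneg_left (by positivity))

theorem HasPolynomialGrowth.lintegral_rpow_mul_rpow_le (hu : HasPolynomialGrowth m u A d)
    (hv : HasPolynomialGrowth m v A d) (hu_meas : Measurable u) (hv_meas : Measurable v)
    (hu_pos : ∀ x, 0 < u x) (hv_pos : ∀ x, 0 < v x) (hαd : α < d) (hβd : β < d)
    (hαβ : d < α + β) (hr : 0 < r) (huv : ∀ x, 2 * r ≤ u x + v x) :
    ∫⁻ x, ENNReal.ofReal (u x ^ (-α) * v x ^ (-β)) ∂m ≤ A * ENNReal.ofReal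
      ((d / (d - α) + d / (d - β) + 2 * ((α + β) / (α + β - d))) * r ^ (d - (α + β))) := by
  have hα : 0 < α := by linarith
  have hβ : 0 < β := by linarith
  have hu_le := hu.lintegral_rpow_mul_max_rpow_le hu_meas hu_pos hα hαd hαβ hr
  have hv_le := hv.lintegral_rpow_mul_max_rpow_le hv_meas hv_pos hβ hβd (add_comm α β ▸ hαβ) hr
  calc ∫⁻ x, ENNReal.ofReal (u x ^ (-α) * v x ^ (-β)) ∂m
      ≤ ∫⁻ x, (ENNReal.ofReal (u x ^ (-α) * max (u x) r ^ (-β)) +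
          ENNReal.ofReal (v x ^ (-β) * max (v x) r ^ (-α))) ∂m :=
        lintegral_mono fun x => (ENNReal.ofReal_le_ofReal (rpow_neg_mul_rpow_neg_le_add
          (hu_pos x) (hv_pos x) hα.le hβ.le (huv x))).trans ENNReal.ofReal_add_le
    _ ≤ _ := (lintegral_add_left (by fun_prop) _).trans_le (add_le_add hu_le hv_le)
    _ = _ := by
        have : 0 < d - α := sub_pos.2 hαd
        have : 0 < d - β := sub_pos.2 hβd
        have : 0 < α + β - d := sub_pos.2 hαβ
        have hd : 0 < d := hα.trans hαd
        rw [add_comm β α, ← mul_add, ← ENNReal.ofReal_add (by positivity) (by positivity)]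
        ring_nf

end WeightGrowth

lemma sqrt_abs_add_le (a b : ℝ) : √|a + b| ≤ √|a| + √|b| := by
  refine Real.sqrt_le_iff.2 ⟨by positivity, ?_⟩
  rw [add_sq, Real.sq_sqrt (abs_nonneg a), Real.sq_sqrt (abs_nonneg b)]
  have hcross : 0 ≤ 2 * √|a| * √|b| := by positivity
  linarith [abs_add_le a b]

lemma one_le_pweight (μ : ℝ × (Fin 3 → ℤ)) : 1 ≤ pweight μ := by
  unfold pweight
  linarith [Real.sqrt_nonneg |μ.1|, Real.sqrt_nonneg (∑ i, ((μ.2 i : ℝ)) ^ 2)]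

lemma pweight_pos (μ : ℝ × (Fin 3 → ℤ)) : 0 < pweight μ :=
  zero_lt_one.trans_le (one_le_pweight μ)

lemma measurable_pweight : Measurable pweight := by
  unfold pweight
  fun_prop

lemma pweight_add_le (μ ν : ℝ × (Fin 3 → ℤ)) : pweight (μ + ν) ≤ pweight μ + pweight ν := by
  have hspace := norm_add_le (WithLp.toLp 2 fun i => (μ.2 i : ℝ))
    (WithLp.toLp 2 fun i => (ν.2 i : ℝ))
  simp only [EuclideanSpace.norm_eq, PiLp.add_apply, Real.norm_eq_abs, sq_abs] at hspace
  simp only [pweight, Prod.fst_add, Prod.snd_add, Pi.add_apply, Int.cast_add]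
  linarith [sqrt_abs_add_le μ.1 ν.1]

lemma count_forall_one_add_abs_le {ι : Type*} [Fintype ι] {R : ℝ} (hR : 0 ≤ R) :
    Measure.count {k : ι → ℤ | ∀ i, 1 + |(k i : ℝ)| ≤ R} ≤
      ENNReal.ofReal ((2 * R) ^ Fintype.card ι) := by
  classical
  have hbox : {k : ι → ℤ | ∀ i, 1 + |(k i : ℝ)| ≤ R} =
      (Fintype.piFinset fun _ : ι => Finset.Icc (-⌊R - 1⌋) ⌊R - 1⌋ : Finset (ι → ℤ)) := by
    ext k
    simp only [Set.mem_ofPred_eq, Finset.mem_coe, Fintype.mem_piFinset, Finset.mem_Icc]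
    refine forall_congr' fun i => ?_
    rw [← abs_le, Int.le_floor, Int.cast_abs, le_sub_iff_add_le']
  have hside : ((Finset.Icc (-⌊R - 1⌋) ⌊R - 1⌋).card : ℝ) ≤ 2 * R := by
    rw [Int.card_Icc, ← Int.cast_natCast, Int.toNat_eq_max, Int.cast_max]
    refine max_le ?_ (by simpa using hR)
    push_cast
    linarith [Int.floor_le (R - 1)]
  rw [hbox, Measure.count_apply_finset, Fintype.card_piFinset, Finset.prod_const,
    Finset.card_univ, ← ENNReal.ofReal_natCast]
  push_cast
  gcongr

lemma hasPolynomialGrowth_pweight : HasPolynomialGrowth Emeasure pweight 16 5 := by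
  intro R hR
  have hsub : {μ | pweight μ ≤ R} ⊆
      Set.Icc (-R ^ 2) (R ^ 2) ×ˢ {k : Fin 3 → ℤ | ∀ i, 1 + |(k i : ℝ)| ≤ R} := by
    intro μ hμ
    have hμ' : 1 + √|μ.1| + √(∑ i, (μ.2 i : ℝ) ^ 2) ≤ R := hμ
    have htime : |μ.1| ≤ R ^ 2 :=
      (Real.sqrt_le_left hR.le).1 (by linarith [Real.sqrt_nonneg (∑ i, (μ.2 i : ℝ) ^ 2)])
    have hspace (i : Fin 3) : |(μ.2 i : ℝ)| ≤ √(∑ i, (μ.2 i : ℝ) ^ 2) :=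
      Real.abs_le_sqrt (Finset.single_le_sum (f := fun i => (μ.2 i : ℝ) ^ 2)
        (fun i _ => sq_nonneg _) (Finset.mem_univ i))
    exact ⟨abs_le.1 htime, fun i => by linarith [hspace i, Real.sqrt_nonneg |μ.1|]⟩
  calc Emeasure {μ | pweight μ ≤ R}
      ≤ ENNReal.ofReal (2 * R ^ 2) * ENNReal.ofReal ((2 * R) ^ 3) := by
        refine (measure_mono hsub).trans ?_
        rw [Emeasure, Measure.prod_prod, Real.volume_Icc, sub_neg_eq_add, ← two_mul]
        gcongr
        exact count_forall_one_add_abs_le hR.le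
    _ = 16 * ENNReal.ofReal (R ^ (5 : ℝ)) := by
        rw [← ENNReal.ofReal_ofNat, ← ENNReal.ofReal_mul (by positivity),
          ← ENNReal.ofReal_mul (by positivity)]
        norm_cast
        ring_nf

lemma hasPolynomialGrowth_pweight_sub_left (ν : ℝ × (Fin 3 → ℤ)) :
    HasPolynomialGrowth Emeasure (fun μ => pweight (ν - μ)) 16 5 :=
  hasPolynomialGrowth_pweight.comp_measurePreserving measurable_pweight
    ((Measure.measurePreserving_sub_left volume ν.1).prod
      (Measure.measurePreserving_sub_left Measure.count ν.2))

/-- for `α, β ∈ (0,5)` with `α + β > 5` there is a constant `C` such that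
`∫_E |μ|_*^{-α} |ν - μ|_*^{-β} dμ ≤ C |ν|_*^{-α-β+5}` for all `ν ∈ E`. -/
theorem statement1 :
    ∀ α β : ℝ, α ∈ Set.Ioo (0 : ℝ) 5 → β ∈ Set.Ioo (0 : ℝ) 5 → 5 < α + β →
      ∃ C : ℝ, 0 < C ∧ ∀ ν : ℝ × (Fin 3 → ℤ),
        ∫⁻ μ, ENNReal.ofReal ((pweight μ) ^ (-α) * (pweight (ν - μ)) ^ (-β)) ∂Emeasure ≤
          ENNReal.ofReal (C * (pweight ν) ^ (-α - β + 5)) := by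
  intro α β ⟨hα, hα5⟩ ⟨hβ, hβ5⟩ hαβ
  set K := 5 / (5 - α) + 5 / (5 - β) + 2 * ((α + β) / (α + β - 5)) with hK
  have : 0 < K := by
    have : 0 < 5 - α := sub_pos.2 hα5
    have : 0 < 5 - β := sub_pos.2 hβ5
    have : 0 < α + β - 5 := sub_pos.2 hαβ
    positivity
  refine ⟨16 * K / 2 ^ (5 - (α + β)), by positivity, fun ν => ?_⟩
  have htriangle (μ) : 2 * (pweight ν / 2) ≤ pweight μ + pweight (ν - μ) := by
    simpa [mul_div_cancel₀] using pweight_add_le μ (ν - μ)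
  refine (hasPolynomialGrowth_pweight.lintegral_rpow_mul_rpow_le
    (hasPolynomialGrowth_pweight_sub_left ν) measurable_pweight
    (measurable_pweight.comp (measurable_const.sub measurable_id)) pweight_pos
    (fun μ => pweight_pos (ν - μ)) hα5 hβ5 hαβ (half_pos (pweight_pos ν)) htriangle).trans_eq ?_
  rw [← hK, ← ENNReal.ofReal_ofNat, ← ENNReal.ofReal_mul (by positivity),
    Real.div_rpow (pweight_pos ν).le zero_le_two]
  ring_nf
end
end

section
/- Let χ : R^3 → R be continuous with 0 ≤ χ ≤ 1, supp χ ⊂ B(0,1), χ = 1 in a neighborhood of 0 (or merely χ(0)=1 and χ continuous), and μ > 0. Define c^ε = Σ_{k_1,k_2∈Z^3} χ(εk_1)²χ(εk_2)² / (4(4π²μ|k_1|²+1)(4π²μ|k_2|²+1)(α_1 + iβ_1)), with α_1, β_1 as above. Then there exists a constant C > 0 such that C^{-1} log(1/ε) ≤ |c^ε| ≤ C log(1/ε) for all sufficiently small ε ∈ (0,1); moreover the same upper and lower bounds hold for Re c^ε. -/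
noncomputable section

/-- Euclidean norm on `ℝ³`. -/
def enorm3 (x : Fin 3 → ℝ) : ℝ := Real.sqrt (∑ i, (x i) ^ 2)

/-- Coercion of a lattice point `k ∈ ℤ³` to `ℝ³`. -/
def latR (k : Fin 3 → ℤ) : Fin 3 → ℝ := fun i => (k i : ℝ)

/-- `|k|²` for `k ∈ ℤ³`. -/
def nsq (k : Fin 3 → ℤ) : ℝ := ∑ i, ((k i : ℝ)) ^ 2

/-- `α₁ = 4π²μ(|k₁+k₂|² + |k₁|² + |k₂|²) + 3`. -/
def alpha1 (μ : ℝ) (k₁ k₂ : Fin 3 → ℤ) : ℝ :=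
  4 * Real.pi ^ 2 * μ * (nsq (k₁ + k₂) + nsq k₁ + nsq k₂) + 3

/-- `β₁ = 4π²(|k₁+k₂|² − |k₁|² − |k₂|²)`. -/
def beta1 (k₁ k₂ : Fin 3 → ℤ) : ℝ :=
  4 * Real.pi ^ 2 * (nsq (k₁ + k₂) - nsq k₁ - nsq k₂)

/-- The renormalization constant
`c^ε = Σ_{k₁,k₂} χ(εk₁)²χ(εk₂)² / (4(4π²μ|k₁|²+1)(4π²μ|k₂|²+1)(α₁+iβ₁))`. -/
def renormC (χ : (Fin 3 → ℝ) → ℝ) (μ ε : ℝ) : ℂ :=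
  ∑' p : (Fin 3 → ℤ) × (Fin 3 → ℤ),
    (((χ (ε • latR p.1)) ^ 2 * (χ (ε • latR p.2)) ^ 2 : ℝ) : ℂ) /
      (4 * ((4 * Real.pi ^ 2 * μ * nsq p.1 + 1 : ℝ) : ℂ) *
        ((4 * Real.pi ^ 2 * μ * nsq p.2 + 1 : ℝ) : ℂ) *
        ((alpha1 μ p.1 p.2 : ℂ) + (beta1 p.1 p.2 : ℂ) * Complex.I))

/-!
The denominator of the summand lies in the sector `|Im z| ≤ μ⁻¹ Re z`, because
`||k₁ + k₂|² - |k₁|² - |k₂|²| ≤ |k₁ + k₂|² + |k₁|² + |k₂|²`. Hence nothing cancels: both the modulus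
of a summand and its real part are comparable to `1 / (a b max(a, b))`, where `a` and `b` are the
values of `4π²μ|k|² + 1` at `k₁` and `k₂`, which are in turn comparable to `(1 + ‖kᵢ‖)²` for the sup
norm. The cutoff restricts `‖kᵢ‖` to a multiple of `1 / ε` from above and is bounded below on a
smaller multiple of `1 / ε`. A sup-norm shell of radius `n` in `ℤ³` has about `n²` points, so these
sums are comparable to `∑_{m, n ≤ N} 1 / max(m, n)²` with `N` of order `1 / ε`. The pairs with
`max(m, n) = n` contribute `(2n - 1) / n²`, which lies between `1 / n` and `2 / n`, so the double
sum lies between one and two harmonic numbers.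
-/

section Box

open Finset

section OrderedRing

variable {α M : Type*} [Ring α] [PartialOrder α] [IsOrderedRing α] [LocallyFiniteOrder α]
  [DecidableEq α] [AddCommMonoid M]

lemma sum_Icc_neg_eq_sum_range_sum_box (f : α → M) (N : ℕ) :
    ∑ x ∈ Icc (-N : α) N, f x = ∑ n ∈ range (N + 1), ∑ x ∈ box n, f x := by
  induction N with
  | zero => simp
  | succ N ih =>
    rw [sum_range_succ, ← ih, ← Nat.succ_eq_add_one, ← box_succ_disjUnion, sum_disjUnion, add_comm]

end OrderedRing

section IntegerLattice

variable {ι : Type*} [Fintype ι] [DecidableEq ι]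

lemma mem_Icc_neg_floor_iff_norm_le {T : ℝ} (hT : 0 ≤ T) {k : ι → ℤ} :
    k ∈ Icc (-(⌊T⌋₊ : ι → ℤ)) ⌊T⌋₊ ↔ ‖k‖ ≤ T := by
  have coord (i : ι) : -(⌊T⌋₊ : ℤ) ≤ k i ∧ k i ≤ ⌊T⌋₊ ↔ ‖k i‖ ≤ T := by
    rw [← abs_le, Int.abs_eq_natAbs, Nat.cast_le, Nat.le_floor_iff hT, Nat.cast_natAbs,
      Int.norm_eq_abs, Int.cast_abs]
  simp only [mem_Icc, Pi.le_def, Pi.neg_apply, Pi.natCast_apply, ← forall_and, coord,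
    pi_norm_le_iff_of_nonneg hT]

lemma mem_Icc_neg_natCast_iff_norm_le {n : ℕ} {k : ι → ℤ} :
    k ∈ Icc (-n : ι → ℤ) n ↔ ‖k‖ ≤ n := by
  simpa only [Nat.floor_natCast] using mem_Icc_neg_floor_iff_norm_le (T := n) n.cast_nonneg (k := k)

lemma norm_eq_of_mem_box {n : ℕ} {k : ι → ℤ} (hk : k ∈ box n) : ‖k‖ = n := by
  cases n with
  | zero => simp_all
  | succ n =>
    rw [box_succ_eq_sdiff, mem_sdiff, mem_Icc_neg_natCast_iff_norm_le,
      mem_Icc_neg_natCast_iff_norm_le, pi_norm_le_iff_of_nonneg n.cast_nonneg] at hk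
    obtain ⟨hle, hlt⟩ := hk
    push Not at hlt
    obtain ⟨i, hi⟩ := hlt
    refine hle.antisymm (le_trans ?_ (norm_le_pi_norm k i))
    rw [Int.norm_eq_abs] at hi ⊢
    exact_mod_cast hi

lemma card_Icc_neg_natCast (n : ℕ) :
    #(Icc (-n : ι → ℤ) n) = (2 * n + 1) ^ Fintype.card ι := by
  simp only [Pi.card_Icc, Pi.neg_apply, Pi.natCast_apply, Int.card_Icc, prod_const, card_univ]
  congr 1
  omega

lemma card_box_succ_add_pow (n : ℕ) :
    #(box (n + 1) : Finset (ι → ℤ)) + (2 * n + 1) ^ Fintype.card ι =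
      (2 * n + 3) ^ Fintype.card ι := by
  have h := congrArg card (box_succ_disjUnion (α := ι → ℤ) n)
  rwa [card_disjUnion, card_Icc_neg_natCast, card_Icc_neg_natCast] at h

lemma card_box_succ_fin_three (n : ℕ) :
    #(box (n + 1) : Finset (Fin 3 → ℤ)) = 24 * (n + 1) ^ 2 + 2 := by
  have h := card_box_succ_add_pow (ι := Fin 3) n
  have cubes : (2 * n + 3) ^ 3 = 24 * (n + 1) ^ 2 + 2 + (2 * n + 1) ^ 3 := by ring
  rwa [Fintype.card_fin, cubes, Nat.add_right_cancel_iff] at h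

lemma sq_le_card_box_fin_three (n : ℕ) : (n + 1) ^ 2 ≤ #(box n : Finset (Fin 3 → ℤ)) := by
  cases n with
  | zero => simp
  | succ n =>
    rw [card_box_succ_fin_three]
    nlinarith

lemma card_box_fin_three_le (n : ℕ) : #(box n : Finset (Fin 3 → ℤ)) ≤ 26 * (n + 1) ^ 2 := by
  cases n with
  | zero => simp
  | succ n =>
    rw [card_box_succ_fin_three]
    ring_nf
    omega

end IntegerLattice

end Box

section HarmonicSum

open Finset

lemma sum_range_succ_inv_max_sq (N : ℕ) :
    ∑ m ∈ range (N + 1), ∑ n ∈ range (N + 1), (max ((m + 1 : ℝ) ^ 2) ((n + 1) ^ 2))⁻¹ =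
      ∑ m ∈ range N, ∑ n ∈ range N, (max ((m + 1 : ℝ) ^ 2) ((n + 1) ^ 2))⁻¹ +
        (2 * N + 1) / (N + 1) ^ 2 := by
  have last_row : ∑ n ∈ range N, (max ((N + 1 : ℝ) ^ 2) ((n + 1) ^ 2))⁻¹ = N / (N + 1) ^ 2 := by
    rw [sum_congr rfl (g := fun _ => ((N + 1 : ℝ) ^ 2)⁻¹), sum_const, card_range, nsmul_eq_mul,
      div_eq_mul_inv]
    intro n hn
    rw [max_eq_left]
    gcongr
    exact (mem_range.1 hn).le
  have last_column : ∑ m ∈ range N, (max ((m + 1 : ℝ) ^ 2) ((N + 1) ^ 2))⁻¹ = N / (N + 1) ^ 2 := by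
    simp_rw [max_comm _ ((N + 1 : ℝ) ^ 2), last_row]
  simp only [sum_range_succ, sum_add_distrib, last_row, last_column, max_self]
  ring

lemma harmonic_le_sum_inv_max_sq (N : ℕ) :
    (harmonic N : ℝ) ≤
      ∑ m ∈ range N, ∑ n ∈ range N, (max ((m + 1 : ℝ) ^ 2) ((n + 1) ^ 2))⁻¹ := by
  induction N with
  | zero => simp
  | succ N ih =>
    rw [sum_range_succ_inv_max_sq, harmonic_succ]
    push_cast
    gcongr
    rw [inv_eq_one_div, div_le_div_iff₀ (by positivity) (by positivity)]
    nlinarith [N.cast_nonneg (α := ℝ)]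

lemma sum_inv_max_sq_le_two_mul_harmonic (N : ℕ) :
    ∑ m ∈ range N, ∑ n ∈ range N, (max ((m + 1 : ℝ) ^ 2) ((n + 1) ^ 2))⁻¹ ≤ 2 * harmonic N := by
  induction N with
  | zero => simp
  | succ N ih =>
    rw [sum_range_succ_inv_max_sq, harmonic_succ]
    push_cast
    rw [mul_add]
    gcongr
    rw [← div_eq_mul_inv, div_le_div_iff₀ (by positivity) (by positivity)]
    nlinarith [N.cast_nonneg (α := ℝ)]

end HarmonicSum

/-- The homogeneous cubic weight `a b max(a, b)`. With `a` and `b` the massive symbols of `k₁` and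
`k₂`, it is the size of the denominator of the summand of `renormC`. -/
def cubicWeight (a b : ℝ) : ℝ := a * b * max a b

/-- The model of `renormC`: the sum of the inverse weights over the pairs of lattice points of sup
norm at most `N`, with `(1 + ‖k‖)²` in place of the massive symbol, so that the `n`-th sup-norm
shell, starting at `n = 0`, carries the value `(n + 1)²`. -/
def latticeSum (N : ℕ) : ℝ :=
  ∑ p ∈ Finset.Icc (-N : Fin 3 → ℤ) N ×ˢ Finset.Icc (-N : Fin 3 → ℤ) N,
    (cubicWeight ((1 + ‖p.1‖) ^ 2) ((1 + ‖p.2‖) ^ 2))⁻¹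

section LatticeSum

open Finset

lemma cubicWeight_pos {a b : ℝ} (ha : 0 < a) (hb : 0 < b) : 0 < cubicWeight a b := by
  unfold cubicWeight
  positivity

lemma cubicWeight_le_cubicWeight {a a' b b' : ℝ} (ha : 0 ≤ a) (hb : 0 ≤ b) (haa' : a ≤ a')
    (hbb' : b ≤ b') : cubicWeight a b ≤ cubicWeight a' b' := by
  have ha' := ha.trans haa'
  have hb' := hb.trans hbb'
  unfold cubicWeight
  gcongr

lemma cubicWeight_mul_mul {c : ℝ} (hc : 0 ≤ c) (a b : ℝ) :
    cubicWeight (c * a) (c * b) = c ^ 3 * cubicWeight a b := by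
  rw [cubicWeight, cubicWeight, ← mul_max_of_nonneg _ _ hc]
  ring

lemma latticeSum_eq_sum_card_box (N : ℕ) :
    latticeSum N = ∑ m ∈ range (N + 1), ∑ n ∈ range (N + 1),
      (#(box m : Finset (Fin 3 → ℤ)) : ℝ) / (m + 1) ^ 2 *
        (#(box n : Finset (Fin 3 → ℤ)) / (n + 1) ^ 2) *
        (max ((m + 1 : ℝ) ^ 2) ((n + 1) ^ 2))⁻¹ := by
  rw [latticeSum, sum_product, sum_Icc_neg_eq_sum_range_sum_box]
  simp_rw [sum_Icc_neg_eq_sum_range_sum_box]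
  refine sum_congr rfl fun m _ => ?_
  rw [sum_comm]
  refine sum_congr rfl fun n _ => ?_
  have const_on_boxes (k) (hk : k ∈ (box m : Finset (Fin 3 → ℤ))) (l)
      (hl : l ∈ (box n : Finset (Fin 3 → ℤ))) :
      (cubicWeight ((1 + ‖k‖) ^ 2) ((1 + ‖l‖) ^ 2))⁻¹ =
        (cubicWeight ((m + 1) ^ 2) ((n + 1) ^ 2))⁻¹ := by
    rw [norm_eq_of_mem_box hk, norm_eq_of_mem_box hl, add_comm 1, add_comm 1]
  rw [sum_congr rfl fun k hk => sum_congr rfl (const_on_boxes k hk)]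
  simp only [sum_const, nsmul_eq_mul, cubicWeight, mul_inv]
  ring

lemma harmonic_le_latticeSum (N : ℕ) : (harmonic (N + 1) : ℝ) ≤ latticeSum N := by
  have density (n : ℕ) : 1 ≤ (#(box n : Finset (Fin 3 → ℤ)) : ℝ) / (n + 1) ^ 2 := by
    rw [one_le_div (by positivity)]
    exact_mod_cast sq_le_card_box_fin_three n
  refine (harmonic_le_sum_inv_max_sq _).trans ?_
  rw [latticeSum_eq_sum_card_box]
  gcongr with m _ n _
  exact le_mul_of_one_le_left (by positivity)
    (one_le_mul_of_one_le_of_one_le (density m) (density n))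

lemma latticeSum_le_harmonic (N : ℕ) : latticeSum N ≤ 1352 * harmonic (N + 1) := by
  have density (n : ℕ) : (#(box n : Finset (Fin 3 → ℤ)) : ℝ) / (n + 1) ^ 2 ≤ 26 := by
    rw [div_le_iff₀ (by positivity)]
    exact_mod_cast card_box_fin_three_le n
  calc latticeSum N
    _ ≤ ∑ m ∈ range (N + 1), ∑ n ∈ range (N + 1),
        26 * 26 * (max ((m + 1 : ℝ) ^ 2) ((n + 1) ^ 2))⁻¹ := by
      rw [latticeSum_eq_sum_card_box]
      gcongr with m _ n _
      exacts [density m, density n]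
    _ = 676 * ∑ m ∈ range (N + 1), ∑ n ∈ range (N + 1),
        (max ((m + 1 : ℝ) ^ 2) ((n + 1) ^ 2))⁻¹ := by
      simp only [← mul_sum]
      norm_num
    _ ≤ 676 * (2 * harmonic (N + 1)) := by
      gcongr
      exact sum_inv_max_sq_le_two_mul_harmonic _
    _ = 1352 * harmonic (N + 1) := by ring

end LatticeSum

section Logarithm

open Filter Topology

lemma tendsto_log_one_div_nhdsGT_zero :
    Tendsto (fun ε : ℝ => Real.log (1 / ε)) (𝓝[>] 0) atTop := by
  simpa only [one_div, Function.comp_def] using Real.tendsto_log_atTop.comp tendsto_inv_nhdsGT_zero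

lemma eventually_harmonic_floor_le {R : ℝ} (hR : 0 ≤ R) :
    ∀ᶠ ε : ℝ in 𝓝[>] 0, (harmonic (⌊R / ε⌋₊ + 1) : ℝ) ≤ 2 * Real.log (1 / ε) := by
  filter_upwards [self_mem_nhdsWithin, Ioo_mem_nhdsGT one_pos,
    tendsto_log_one_div_nhdsGT_zero.eventually_ge_atTop (1 + Real.log (R + 1))]
    with ε (hε : 0 < ε) hε1 hlog
  have floor_le : (⌊R / ε⌋₊ + 1 : ℝ) ≤ (R + 1) * (1 / ε) := by
    rw [add_one_mul, mul_one_div]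
    exact add_le_add (Nat.floor_le (by positivity)) (one_le_one_div hε hε1.2.le)
  calc (harmonic (⌊R / ε⌋₊ + 1) : ℝ)
    _ ≤ 1 + Real.log (⌊R / ε⌋₊ + 1) := by exact_mod_cast harmonic_le_one_add_log _
    _ ≤ 1 + Real.log ((R + 1) * (1 / ε)) := by gcongr
    _ = 1 + Real.log (R + 1) + Real.log (1 / ε) := by
      rw [Real.log_mul (by positivity) (by positivity), add_assoc]
    _ ≤ 2 * Real.log (1 / ε) := by linarith

lemma eventually_log_le_harmonic_floor {δ : ℝ} (hδ : 0 < δ) :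
    ∀ᶠ ε : ℝ in 𝓝[>] 0, Real.log (1 / ε) ≤ 2 * harmonic (⌊δ / ε⌋₊ + 1) := by
  filter_upwards [self_mem_nhdsWithin,
    tendsto_log_one_div_nhdsGT_zero.eventually_ge_atTop (-2 * Real.log δ)]
    with ε (hε : 0 < ε) hlog
  have hδε : Real.log δ + Real.log (1 / ε) ≤ harmonic (⌊δ / ε⌋₊ + 1) := by
    calc Real.log δ + Real.log (1 / ε)
      _ = Real.log (δ / ε) := by
        rw [← Real.log_mul hδ.ne' (by positivity), mul_one_div]
      _ ≤ harmonic ⌊δ / ε⌋₊ := log_le_harmonic_floor _ (by positivity)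
      _ ≤ harmonic (⌊δ / ε⌋₊ + 1) := by
        rw [harmonic_succ]
        push_cast
        exact le_add_of_nonneg_right (by positivity)
  linarith

end Logarithm

section Complex

lemma norm_inv_le_inv_re {z : ℂ} (hz : 0 < z.re) : ‖z⁻¹‖ ≤ z.re⁻¹ := by
  rw [norm_inv]
  exact inv_anti₀ hz z.re_le_norm

lemma inv_mul_re_le_re_inv {z : ℂ} {κ : ℝ} (hz : 0 < z.re) (him : |z.im| ≤ κ * z.re) :
    ((1 + κ ^ 2) * z.re)⁻¹ ≤ (z⁻¹).re := by
  have normSq_le : Complex.normSq z ≤ (1 + κ ^ 2) * z.re ^ 2 := by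
    have := sq_le_sq' (abs_le.1 him).1 (abs_le.1 him).2
    rw [Complex.normSq_apply]
    linarith
  have normSq_pos : 0 < Complex.normSq z := Complex.normSq_pos.2 (Complex.ne_zero_of_re_pos hz)
  rw [Complex.inv_re, inv_eq_one_div, div_le_div_iff₀ (by positivity) normSq_pos]
  linarith

end Complex

section EuclideanNorm

variable {ι : Type*} [Fintype ι]

lemma pi_norm_le_sqrt_sum_sq (x : ι → ℝ) : ‖x‖ ≤ √(∑ i, x i ^ 2) := by
  refine (pi_norm_le_iff_of_nonneg (Real.sqrt_nonneg _)).2 fun i => Real.abs_le_sqrt ?_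
  exact Finset.single_le_sum (f := fun i => x i ^ 2) (fun _ _ => sq_nonneg _) (Finset.mem_univ i)

lemma sum_sq_le_card_mul_sq_pi_norm (x : ι → ℝ) : ∑ i, x i ^ 2 ≤ Fintype.card ι * ‖x‖ ^ 2 := by
  rw [← nsmul_eq_mul, ← Finset.card_univ]
  refine Finset.sum_le_card_nsmul _ _ _ fun i _ => ?_
  rw [← sq_abs, ← Real.norm_eq_abs]
  gcongr
  exact norm_le_pi_norm x i

end EuclideanNorm

section Symbol

lemma norm_latR (k : Fin 3 → ℤ) : ‖latR k‖ = ‖k‖ := by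
  simp only [latR, Pi.norm_def, nnnorm, Int.norm_cast_real]

lemma nsq_nonneg (k : Fin 3 → ℤ) : 0 ≤ nsq k := Finset.sum_nonneg fun _ _ => sq_nonneg _

lemma sq_norm_le_nsq (k : Fin 3 → ℤ) : ‖k‖ ^ 2 ≤ nsq k := by
  rw [← norm_latR, ← Real.le_sqrt (norm_nonneg _) (nsq_nonneg k)]
  exact pi_norm_le_sqrt_sum_sq (latR k)

lemma nsq_le_three_mul_sq_norm (k : Fin 3 → ℤ) : nsq k ≤ 3 * ‖k‖ ^ 2 := by
  calc nsq k ≤ Fintype.card (Fin 3) * ‖latR k‖ ^ 2 := sum_sq_le_card_mul_sq_pi_norm (latR k)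
    _ = 3 * ‖k‖ ^ 2 := by rw [norm_latR, Fintype.card_fin, Nat.cast_ofNat]

lemma nsq_add_le (k l : Fin 3 → ℤ) : nsq (k + l) ≤ 2 * (nsq k + nsq l) := by
  simp only [nsq, ← Finset.sum_add_distrib, Finset.mul_sum, Pi.add_apply, Int.cast_add]
  gcongr
  exact add_sq_le

/-- The Fourier symbol `4π²μ|k|² + 1` of `1 - μΔ` on the torus `ℝ³ / ℤ³`. -/
def massiveSymbol (μ : ℝ) (k : Fin 3 → ℤ) : ℝ := 4 * Real.pi ^ 2 * μ * nsq k + 1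

/-- The denominator of the summand of `renormC`, in terms of the massive symbols. -/
def renormDenom (μ : ℝ) (k l : Fin 3 → ℤ) : ℂ :=
  4 * (massiveSymbol μ k : ℂ) * (massiveSymbol μ l : ℂ) *
    ((alpha1 μ k l : ℂ) + (beta1 k l : ℂ) * Complex.I)

variable {μ : ℝ}

lemma massiveSymbol_pos (hμ : 0 ≤ μ) (k : Fin 3 → ℤ) : 0 < massiveSymbol μ k := by
  have := nsq_nonneg k
  unfold massiveSymbol
  positivity

lemma mul_sq_one_add_norm_le_massiveSymbol (hμ : 0 ≤ μ) (k : Fin 3 → ℤ) :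
    min (4 * Real.pi ^ 2 * μ) 1 / 2 * (1 + ‖k‖) ^ 2 ≤ massiveSymbol μ k := by
  calc min (4 * Real.pi ^ 2 * μ) 1 / 2 * (1 + ‖k‖) ^ 2
    _ ≤ min (4 * Real.pi ^ 2 * μ) 1 / 2 * (2 * (1 ^ 2 + ‖k‖ ^ 2)) := by
      gcongr
      exact add_sq_le
    _ = min (4 * Real.pi ^ 2 * μ) 1 * ‖k‖ ^ 2 + min (4 * Real.pi ^ 2 * μ) 1 := by ring
    _ ≤ 4 * Real.pi ^ 2 * μ * nsq k + 1 := by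
      gcongr
      exacts [min_le_left _ _, sq_norm_le_nsq k, min_le_right _ _]

lemma massiveSymbol_le_mul_sq_one_add_norm (hμ : 0 ≤ μ) (k : Fin 3 → ℤ) :
    massiveSymbol μ k ≤ (12 * Real.pi ^ 2 * μ + 1) * (1 + ‖k‖) ^ 2 := by
  have hk := norm_nonneg k
  calc massiveSymbol μ k
    _ ≤ 4 * Real.pi ^ 2 * μ * (3 * ‖k‖ ^ 2) + 1 := by
      unfold massiveSymbol
      gcongr
      exact nsq_le_three_mul_sq_norm k
    _ = 12 * Real.pi ^ 2 * μ * ‖k‖ ^ 2 + 1 * 1 ^ 2 := by ring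
    _ ≤ 12 * Real.pi ^ 2 * μ * (1 + ‖k‖) ^ 2 + 1 * (1 + ‖k‖) ^ 2 := by
      gcongr <;> linarith
    _ = (12 * Real.pi ^ 2 * μ + 1) * (1 + ‖k‖) ^ 2 := by ring

lemma max_massiveSymbol_le_alpha1 (hμ : 0 ≤ μ) (k l : Fin 3 → ℤ) :
    max (massiveSymbol μ k) (massiveSymbol μ l) ≤ alpha1 μ k l := by
  have hK : 0 ≤ 4 * Real.pi ^ 2 * μ := by positivity
  have hk := mul_nonneg hK (nsq_nonneg k)
  have hl := mul_nonneg hK (nsq_nonneg l)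
  have hkl := mul_nonneg hK (nsq_nonneg (k + l))
  unfold massiveSymbol alpha1
  apply max_le <;> linarith

lemma alpha1_le_max_massiveSymbol (hμ : 0 ≤ μ) (k l : Fin 3 → ℤ) :
    alpha1 μ k l ≤ 6 * max (massiveSymbol μ k) (massiveSymbol μ l) := by
  calc alpha1 μ k l
    _ ≤ 4 * Real.pi ^ 2 * μ * (2 * (nsq k + nsq l) + nsq k + nsq l) + 3 := by
      unfold alpha1
      gcongr
      exact nsq_add_le k l
    _ ≤ 3 * massiveSymbol μ k + 3 * massiveSymbol μ l := by
      unfold massiveSymbol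
      linarith
    _ ≤ 6 * max (massiveSymbol μ k) (massiveSymbol μ l) := by
      linarith [le_max_left (massiveSymbol μ k) (massiveSymbol μ l),
        le_max_right (massiveSymbol μ k) (massiveSymbol μ l)]

lemma abs_beta1_le_inv_mul_alpha1 (hμ : 0 < μ) (k l : Fin 3 → ℤ) :
    |beta1 k l| ≤ μ⁻¹ * alpha1 μ k l := by
  have hk := nsq_nonneg k
  have hl := nsq_nonneg l
  have hkl := nsq_nonneg (k + l)
  have abs_le_sum : |nsq (k + l) - nsq k - nsq l| ≤ nsq (k + l) + nsq k + nsq l :=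
    abs_le.2 ⟨by linarith, by linarith⟩
  calc |beta1 k l|
    _ ≤ 4 * Real.pi ^ 2 * (nsq (k + l) + nsq k + nsq l) := by
      rw [beta1, abs_mul, abs_of_nonneg (by positivity : 0 ≤ 4 * Real.pi ^ 2)]
      gcongr
    _ = μ⁻¹ * (4 * Real.pi ^ 2 * μ * (nsq (k + l) + nsq k + nsq l)) := by field_simp
    _ ≤ μ⁻¹ * alpha1 μ k l := by
      unfold alpha1
      gcongr
      linarith

lemma re_renormDenom (μ : ℝ) (k l : Fin 3 → ℤ) :
    (renormDenom μ k l).re = 4 * massiveSymbol μ k * massiveSymbol μ l * alpha1 μ k l := by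
  simp [renormDenom]

lemma im_renormDenom (μ : ℝ) (k l : Fin 3 → ℤ) :
    (renormDenom μ k l).im = 4 * massiveSymbol μ k * massiveSymbol μ l * beta1 k l := by
  simp [renormDenom]

lemma cubicWeight_le_re_renormDenom (hμ : 0 ≤ μ) (k l : Fin 3 → ℤ) :
    4 * cubicWeight (massiveSymbol μ k) (massiveSymbol μ l) ≤ (renormDenom μ k l).re := by
  have hk := massiveSymbol_pos hμ k
  have hl := massiveSymbol_pos hμ l
  rw [re_renormDenom, cubicWeight, ← mul_assoc, ← mul_assoc]
  gcongr
  exact max_massiveSymbol_le_alpha1 hμ k l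

lemma re_renormDenom_le_cubicWeight (hμ : 0 ≤ μ) (k l : Fin 3 → ℤ) :
    (renormDenom μ k l).re ≤ 24 * cubicWeight (massiveSymbol μ k) (massiveSymbol μ l) := by
  have hk := massiveSymbol_pos hμ k
  have hl := massiveSymbol_pos hμ l
  calc (renormDenom μ k l).re
    _ ≤ 4 * massiveSymbol μ k * massiveSymbol μ l *
        (6 * max (massiveSymbol μ k) (massiveSymbol μ l)) := by
      rw [re_renormDenom]
      gcongr
      exact alpha1_le_max_massiveSymbol hμ k l
    _ = 24 * cubicWeight (massiveSymbol μ k) (massiveSymbol μ l) := by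
      rw [cubicWeight]
      ring

lemma re_renormDenom_pos (hμ : 0 ≤ μ) (k l : Fin 3 → ℤ) : 0 < (renormDenom μ k l).re :=
  (mul_pos four_pos (cubicWeight_pos (massiveSymbol_pos hμ k) (massiveSymbol_pos hμ l))).trans_le
    (cubicWeight_le_re_renormDenom hμ k l)

lemma abs_im_renormDenom_le (hμ : 0 < μ) (k l : Fin 3 → ℤ) :
    |(renormDenom μ k l).im| ≤ μ⁻¹ * (renormDenom μ k l).re := by
  have hk := massiveSymbol_pos hμ.le k
  have hl := massiveSymbol_pos hμ.le l
  rw [im_renormDenom, re_renormDenom, abs_mul, abs_of_pos (by positivity), mul_left_comm]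
  gcongr
  exact abs_beta1_le_inv_mul_alpha1 hμ k l

lemma re_inv_renormDenom_nonneg (hμ : 0 ≤ μ) (k l : Fin 3 → ℤ) :
    0 ≤ ((renormDenom μ k l)⁻¹).re := by
  rw [Complex.inv_re]
  exact div_nonneg (re_renormDenom_pos hμ k l).le (Complex.normSq_nonneg _)

lemma exists_norm_inv_renormDenom_le (hμ : 0 < μ) :
    ∃ C > 0, ∀ k l : Fin 3 → ℤ,
      ‖(renormDenom μ k l)⁻¹‖ ≤ C * (cubicWeight ((1 + ‖k‖) ^ 2) ((1 + ‖l‖) ^ 2))⁻¹ := by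
  set c := min (4 * Real.pi ^ 2 * μ) 1 / 2
  have hc : 0 < c := by positivity
  refine ⟨(4 * c ^ 3)⁻¹, by positivity, fun k l => ?_⟩
  have weight_pos : 0 < cubicWeight ((1 + ‖k‖) ^ 2) ((1 + ‖l‖) ^ 2) :=
    cubicWeight_pos (by positivity) (by positivity)
  calc ‖(renormDenom μ k l)⁻¹‖
    _ ≤ ((renormDenom μ k l).re)⁻¹ := norm_inv_le_inv_re (re_renormDenom_pos hμ.le k l)
    _ ≤ (4 * cubicWeight (c * (1 + ‖k‖) ^ 2) (c * (1 + ‖l‖) ^ 2))⁻¹ := by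
      refine inv_anti₀ ?_ (le_trans ?_ (cubicWeight_le_re_renormDenom hμ.le k l))
      · rw [cubicWeight_mul_mul hc.le]
        positivity
      · gcongr
        exact cubicWeight_le_cubicWeight (by positivity) (by positivity)
          (mul_sq_one_add_norm_le_massiveSymbol hμ.le k)
          (mul_sq_one_add_norm_le_massiveSymbol hμ.le l)
    _ = (4 * c ^ 3)⁻¹ * (cubicWeight ((1 + ‖k‖) ^ 2) ((1 + ‖l‖) ^ 2))⁻¹ := by
      rw [cubicWeight_mul_mul hc.le, ← mul_assoc, mul_inv]

lemma exists_le_re_inv_renormDenom (hμ : 0 < μ) :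
    ∃ c > 0, ∀ k l : Fin 3 → ℤ,
      c * (cubicWeight ((1 + ‖k‖) ^ 2) ((1 + ‖l‖) ^ 2))⁻¹ ≤ ((renormDenom μ k l)⁻¹).re := by
  set C := 12 * Real.pi ^ 2 * μ + 1
  have hC : 0 < C := by positivity
  refine ⟨((1 + μ⁻¹ ^ 2) * 24 * C ^ 3)⁻¹, by positivity, fun k l => ?_⟩
  have re_pos := re_renormDenom_pos hμ.le k l
  calc ((1 + μ⁻¹ ^ 2) * 24 * C ^ 3)⁻¹ * (cubicWeight ((1 + ‖k‖) ^ 2) ((1 + ‖l‖) ^ 2))⁻¹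
    _ = ((1 + μ⁻¹ ^ 2) * (24 * cubicWeight (C * (1 + ‖k‖) ^ 2) (C * (1 + ‖l‖) ^ 2)))⁻¹ := by
      rw [cubicWeight_mul_mul hC.le, ← mul_inv]
      ring_nf
    _ ≤ ((1 + μ⁻¹ ^ 2) * (renormDenom μ k l).re)⁻¹ := by
      refine inv_anti₀ (by positivity) ?_
      gcongr
      refine (re_renormDenom_le_cubicWeight hμ.le k l).trans ?_
      gcongr
      exact cubicWeight_le_cubicWeight (massiveSymbol_pos hμ.le k).le (massiveSymbol_pos hμ.le l).le
        (massiveSymbol_le_mul_sq_one_add_norm hμ.le k)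
        (massiveSymbol_le_mul_sq_one_add_norm hμ.le l)
    _ ≤ ((renormDenom μ k l)⁻¹).re := inv_mul_re_le_re_inv re_pos (abs_im_renormDenom_le hμ k l)

end Symbol

section RenormalizationConstant

open Filter Topology

variable {χ : (Fin 3 → ℝ) → ℝ} {μ ε : ℝ}

/-- The summand of `renormC`, over the pair `p = (k₁, k₂)`. -/
def renormTerm (χ : (Fin 3 → ℝ) → ℝ) (μ ε : ℝ) (p : (Fin 3 → ℤ) × (Fin 3 → ℤ)) : ℂ :=
  ((χ (ε • latR p.1) ^ 2 * χ (ε • latR p.2) ^ 2 : ℝ) : ℂ) / renormDenom μ p.1 p.2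

lemma renormC_eq_tsum_renormTerm (χ : (Fin 3 → ℝ) → ℝ) (μ ε : ℝ) :
    renormC χ μ ε = ∑' p, renormTerm χ μ ε p := rfl

lemma re_renormTerm (χ : (Fin 3 → ℝ) → ℝ) (μ ε : ℝ) (p : (Fin 3 → ℤ) × (Fin 3 → ℤ)) :
    (renormTerm χ μ ε p).re =
      χ (ε • latR p.1) ^ 2 * χ (ε • latR p.2) ^ 2 * ((renormDenom μ p.1 p.2)⁻¹).re := by
  rw [renormTerm, div_eq_mul_inv, Complex.re_ofReal_mul]

lemma re_renormTerm_nonneg (hμ : 0 ≤ μ) (p : (Fin 3 → ℤ) × (Fin 3 → ℤ)) :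
    0 ≤ (renormTerm χ μ ε p).re := by
  rw [re_renormTerm]
  exact mul_nonneg (by positivity) (re_inv_renormDenom_nonneg hμ _ _)

lemma norm_renormTerm_le {B : ℝ} (hB : ∀ x, |χ x| ≤ B) (p : (Fin 3 → ℤ) × (Fin 3 → ℤ)) :
    ‖renormTerm χ μ ε p‖ ≤ B ^ 4 * ‖(renormDenom μ p.1 p.2)⁻¹‖ := by
  have sq_le (x : Fin 3 → ℝ) : χ x ^ 2 ≤ B ^ 2 := sq_le_sq.2 ((hB x).trans (le_abs_self B))
  rw [renormTerm, div_eq_mul_inv, norm_mul, Complex.norm_of_nonneg (by positivity)]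
  gcongr
  calc χ (ε • latR p.1) ^ 2 * χ (ε • latR p.2) ^ 2
    _ ≤ B ^ 2 * B ^ 2 := mul_le_mul (sq_le _) (sq_le _) (sq_nonneg _) (sq_nonneg _)
    _ = B ^ 4 := by ring

lemma norm_le_div_of_cutoff_ne_zero {R : ℝ} (hsupp : Function.support χ ⊆ Metric.closedBall 0 R)
    (hε : 0 < ε) {k : Fin 3 → ℤ} (hk : χ (ε • latR k) ≠ 0) : ‖k‖ ≤ R / ε := by
  have h := mem_closedBall_zero_iff.1 (hsupp hk)
  rw [norm_smul, Real.norm_of_nonneg hε.le, norm_latR] at h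
  rwa [le_div_iff₀' hε]

lemma renormTerm_eq_zero {R : ℝ} (hR : 0 ≤ R) (hsupp : Function.support χ ⊆ Metric.closedBall 0 R)
    (hε : 0 < ε) {p : (Fin 3 → ℤ) × (Fin 3 → ℤ)}
    (hp : p ∉ Finset.Icc (-⌊R / ε⌋₊ : Fin 3 → ℤ) ⌊R / ε⌋₊ ×ˢ
      Finset.Icc (-⌊R / ε⌋₊ : Fin 3 → ℤ) ⌊R / ε⌋₊) :
    renormTerm χ μ ε p = 0 := by
  contrapose! hp
  have hχp : χ (ε • latR p.1) ≠ 0 ∧ χ (ε • latR p.2) ≠ 0 := by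
    constructor <;> refine fun h => hp ?_ <;> simp [renormTerm, h]
  rw [Finset.mem_product, mem_Icc_neg_floor_iff_norm_le (by positivity),
    mem_Icc_neg_floor_iff_norm_le (by positivity)]
  exact ⟨norm_le_div_of_cutoff_ne_zero hsupp hε hχp.1, norm_le_div_of_cutoff_ne_zero hsupp hε hχp.2⟩

lemma norm_renormC_le {B C R : ℝ} (hB : ∀ x, |χ x| ≤ B) (hR : 0 ≤ R)
    (hsupp : Function.support χ ⊆ Metric.closedBall 0 R) (hε : 0 < ε)
    (hC : ∀ k l : Fin 3 → ℤ,
      ‖(renormDenom μ k l)⁻¹‖ ≤ C * (cubicWeight ((1 + ‖k‖) ^ 2) ((1 + ‖l‖) ^ 2))⁻¹) :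
    ‖renormC χ μ ε‖ ≤ B ^ 4 * C * latticeSum ⌊R / ε⌋₊ := by
  rw [renormC_eq_tsum_renormTerm, tsum_eq_sum fun p => renormTerm_eq_zero hR hsupp hε, latticeSum,
    Finset.mul_sum]
  refine norm_sum_le_of_le _ fun p _ => (norm_renormTerm_le hB p).trans ?_
  rw [mul_assoc]
  gcongr
  exact hC _ _

lemma le_re_renormC {R η δ c : ℝ} (hμ : 0 ≤ μ) (hR : 0 ≤ R)
    (hsupp : Function.support χ ⊆ Metric.closedBall 0 R) (hε : 0 < ε) (hη : 0 ≤ η) (hδ : 0 ≤ δ)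
    (hχη : ∀ x, ‖x‖ ≤ δ → η ≤ |χ x|) (hc : 0 ≤ c)
    (hcD : ∀ k l : Fin 3 → ℤ,
      c * (cubicWeight ((1 + ‖k‖) ^ 2) ((1 + ‖l‖) ^ 2))⁻¹ ≤ ((renormDenom μ k l)⁻¹).re) :
    η ^ 4 * c * latticeSum ⌊δ / ε⌋₊ ≤ (renormC χ μ ε).re := by
  have summable : Summable (renormTerm χ μ ε) :=
    summable_of_ne_finset_zero fun p hp => renormTerm_eq_zero hR hsupp hε hp
  have sq_le {k : Fin 3 → ℤ} (hk : k ∈ Finset.Icc (-⌊δ / ε⌋₊ : Fin 3 → ℤ) ⌊δ / ε⌋₊) :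
      η ^ 2 ≤ χ (ε • latR k) ^ 2 := by
    rw [mem_Icc_neg_floor_iff_norm_le (by positivity), le_div_iff₀' hε] at hk
    refine sq_le_sq.2 ((abs_of_nonneg hη).trans_le (hχη _ ?_))
    rwa [norm_smul, Real.norm_of_nonneg hε.le, norm_latR]
  rw [renormC_eq_tsum_renormTerm, Complex.re_tsum summable, latticeSum, Finset.mul_sum]
  refine le_trans (Finset.sum_le_sum fun p hp => ?_)
    ((Complex.hasSum_re summable.hasSum).summable.sum_le_tsum _
      fun p _ => re_renormTerm_nonneg hμ p)
  obtain ⟨hk, hl⟩ := Finset.mem_product.1 hp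
  have weight_pos : 0 < cubicWeight ((1 + ‖p.1‖) ^ 2) ((1 + ‖p.2‖) ^ 2) :=
    cubicWeight_pos (by positivity) (by positivity)
  rw [re_renormTerm]
  calc η ^ 4 * c * (cubicWeight ((1 + ‖p.1‖) ^ 2) ((1 + ‖p.2‖) ^ 2))⁻¹
    _ = η ^ 2 * η ^ 2 * (c * (cubicWeight ((1 + ‖p.1‖) ^ 2) ((1 + ‖p.2‖) ^ 2))⁻¹) := by ring
    _ ≤ χ (ε • latR p.1) ^ 2 * χ (ε • latR p.2) ^ 2 * ((renormDenom μ p.1 p.2)⁻¹).re := by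
      gcongr ?_ * ?_ * ?_
      exacts [sq_le hk, sq_le hl, hcD _ _]

lemma exists_eventually_norm_renormC_le {B : ℝ} (hB : ∀ x, |χ x| ≤ B)
    (hsupp : Bornology.IsBounded (Function.support χ)) (hμ : 0 < μ) :
    ∃ C, ∀ᶠ ε in 𝓝[>] 0, ‖renormC χ μ ε‖ ≤ C * Real.log (1 / ε) := by
  obtain ⟨R, hR, hsuppR⟩ := hsupp.subset_closedBall_lt 0 0
  obtain ⟨C, hC, hCD⟩ := exists_norm_inv_renormDenom_le hμ
  refine ⟨B ^ 4 * C * (1352 * 2), ?_⟩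
  filter_upwards [self_mem_nhdsWithin, eventually_harmonic_floor_le hR.le]
    with ε (hε : 0 < ε) hlog
  calc ‖renormC χ μ ε‖
    _ ≤ B ^ 4 * C * latticeSum ⌊R / ε⌋₊ := norm_renormC_le hB hR.le hsuppR hε hCD
    _ ≤ B ^ 4 * C * (1352 * (2 * Real.log (1 / ε))) := by
      gcongr
      exact (latticeSum_le_harmonic _).trans (by gcongr)
    _ = B ^ 4 * C * (1352 * 2) * Real.log (1 / ε) := by ring

lemma exists_eventually_le_re_renormC (hcont : ContinuousAt χ 0) (h0 : χ 0 ≠ 0)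
    (hsupp : Bornology.IsBounded (Function.support χ)) (hμ : 0 < μ) :
    ∃ c > 0, ∀ᶠ ε in 𝓝[>] 0, c * Real.log (1 / ε) ≤ (renormC χ μ ε).re := by
  obtain ⟨R, hR, hsuppR⟩ := hsupp.subset_closedBall_lt 0 0
  obtain ⟨c, hc, hcD⟩ := exists_le_re_inv_renormDenom hμ
  have half_pos : 0 < |χ 0| / 2 := by positivity
  obtain ⟨δ, hδ, hχδ⟩ : ∃ δ > 0, ∀ x, ‖x‖ ≤ δ → |χ 0| / 2 ≤ |χ x| := by
    have near : ∀ᶠ x in 𝓝 0, |χ 0| / 2 < |χ x| :=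
      hcont.abs.eventually_const_lt (half_lt_self (abs_pos.2 h0))
    obtain ⟨δ, hδ, hball⟩ := Metric.nhds_basis_closedBall.eventually_iff.1 near
    exact ⟨δ, hδ, fun x hx => (hball (mem_closedBall_zero_iff.2 hx)).le⟩
  refine ⟨(|χ 0| / 2) ^ 4 * c / 2, by positivity, ?_⟩
  filter_upwards [self_mem_nhdsWithin, eventually_log_le_harmonic_floor hδ]
    with ε (hε : 0 < ε) hlog
  calc (|χ 0| / 2) ^ 4 * c / 2 * Real.log (1 / ε)
    _ ≤ (|χ 0| / 2) ^ 4 * c / 2 * (2 * harmonic (⌊δ / ε⌋₊ + 1)) := by gcongr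
    _ = (|χ 0| / 2) ^ 4 * c * harmonic (⌊δ / ε⌋₊ + 1) := by ring
    _ ≤ (|χ 0| / 2) ^ 4 * c * latticeSum ⌊δ / ε⌋₊ := by
      gcongr
      exact harmonic_le_latticeSum _
    _ ≤ (renormC χ μ ε).re :=
      le_re_renormC hμ.le hR.le hsuppR hε half_pos.le hδ.le hχδ hc.le hcD

lemma isBounded_of_enorm3_lt {r : ℝ} : Bornology.IsBounded {x | enorm3 x < r} :=
  (Metric.isBounded_closedBall (x := 0) (r := r)).subset fun x hx =>
    mem_closedBall_zero_iff.2 ((pi_norm_le_sqrt_sum_sq x).trans (le_of_lt hx))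

theorem statement5_general (hcont : ContinuousAt χ 0) (h0 : χ 0 ≠ 0) {B : ℝ}
    (hB : ∀ x, |χ x| ≤ B) (hsupp : Bornology.IsBounded (Function.support χ)) (hμ : 0 < μ) :
    ∃ C : ℝ, 0 < C ∧ ∃ ε₀ ∈ Set.Ioo (0 : ℝ) 1, ∀ ε ∈ Set.Ioo (0 : ℝ) ε₀,
      (C⁻¹ * Real.log (1 / ε) ≤ ‖renormC χ μ ε‖ ∧
        ‖renormC χ μ ε‖ ≤ C * Real.log (1 / ε)) ∧
      (C⁻¹ * Real.log (1 / ε) ≤ (renormC χ μ ε).re ∧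
        (renormC χ μ ε).re ≤ C * Real.log (1 / ε)) := by
  obtain ⟨C, hC⟩ := exists_eventually_norm_renormC_le hB hsupp hμ
  obtain ⟨c, hc, hcC⟩ := exists_eventually_le_re_renormC hcont h0 hsupp hμ
  have bounds : ∀ᶠ ε in 𝓝[>] 0, (max C c⁻¹)⁻¹ * Real.log (1 / ε) ≤ (renormC χ μ ε).re ∧
      ‖renormC χ μ ε‖ ≤ max C c⁻¹ * Real.log (1 / ε) := by
    filter_upwards [hC, hcC, tendsto_log_one_div_nhdsGT_zero.eventually_ge_atTop 0]
      with ε hupper hlower hlog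
    refine ⟨le_trans ?_ hlower, hupper.trans ?_⟩ <;> gcongr
    · exact inv_le_of_inv_le₀ hc (le_max_right _ _)
    · exact le_max_left _ _
  obtain ⟨ε₀, ⟨hε₀, hε₀_le⟩, hsub⟩ :=
    (mem_nhdsGT_iff_exists_mem_Ioc_Ioo_subset (half_pos one_pos)).1 bounds
  refine ⟨max C c⁻¹, by positivity, ε₀, ⟨hε₀, hε₀_le.trans_lt one_half_lt_one⟩, fun ε hε => ?_⟩
  obtain ⟨hlower, hupper⟩ := hsub hε
  have re_le_norm := (renormC χ μ ε).re_le_norm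
  exact ⟨⟨hlower.trans re_le_norm, hupper⟩, hlower, re_le_norm.trans hupper⟩

end RenormalizationConstant

/-- there is `C > 0` with `C⁻¹ log(1/ε) ≤ |c^ε| ≤ C log(1/ε)` for all
sufficiently small `ε ∈ (0,1)`, and the same two-sided bounds hold for `Re c^ε`. -/
theorem statement5 (χ : (Fin 3 → ℝ) → ℝ) (hχcont : Continuous χ)
    (hχ01 : ∀ x, χ x ∈ Set.Icc (0 : ℝ) 1)
    (hχsupp : Function.support χ ⊆ {x | enorm3 x < 1}) (hχ0 : χ 0 = 1)
    (μ : ℝ) (hμ : 0 < μ) :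
    ∃ C : ℝ, 0 < C ∧ ∃ ε₀ ∈ Set.Ioo (0 : ℝ) 1, ∀ ε ∈ Set.Ioo (0 : ℝ) ε₀,
      (C⁻¹ * Real.log (1 / ε) ≤ ‖renormC χ μ ε‖ ∧
        ‖renormC χ μ ε‖ ≤ C * Real.log (1 / ε)) ∧
      (C⁻¹ * Real.log (1 / ε) ≤ (renormC χ μ ε).re ∧
        (renormC χ μ ε).re ≤ C * Real.log (1 / ε)) := by
  exact statement5_general hχcont.continuousAt (hχ0 ▸ one_ne_zero)
    (fun x => (abs_of_nonneg (hχ01 x).1).trans_le (hχ01 x).2)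
    (isBounded_of_enorm3_lt.subset hχsupp) hμ
end
end

section
/- Let μ > 0 and P_t = e^{t((i+μ)Δ−1)} on T^3. Let α < 1, β ∈ R, δ ≥ 0. The commutator [P_t, u ≺]v = P_t(u ≺ v) − u ≺ (P_t v) satisfies ‖[P_t, u ≺]v‖_{C^{α+β+2δ}} ≲ t^{-δ} ‖u‖_{C^α} ‖v‖_{C^β}, uniformly over t > 0. -/
open scoped ENNReal

noncomputable section

/-- A dyadic partition of unity `{ρ_m}_{m ≥ -1}` on `ℝ³` (indexed by `ℤ`, with `ρ_m = 0`
for `m < -1`). -/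
def IsDyadicPartition (ρ : ℤ → (Fin 3 → ℝ) → ℝ) : Prop :=
  (∀ m, ContDiff ℝ (⊤ : ℕ∞) (ρ m)) ∧
  (∀ m x, ρ m x ∈ Set.Icc (0 : ℝ) 1) ∧
  (∀ m x y, enorm3 x = enorm3 y → ρ m x = ρ m y) ∧
  (∀ m, m < -1 → ρ m = 0) ∧
  (Function.support (ρ (-1)) ⊆ {x | enorm3 x < 4 / 3}) ∧
  (Function.support (ρ 0) ⊆ {x | 3 / 4 ≤ enorm3 x ∧ enorm3 x < 8 / 3}) ∧
  (∀ m : ℤ, 0 ≤ m → ∀ x, ρ m x = ρ 0 (((2 : ℝ) ^ (-m)) • x)) ∧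
  (∀ x, ∑' m : ℤ, ρ m x = 1)

/-- The Fourier mode `e_k(x) = e^{2πi k·x}` on the 3-torus, as a function on `ℝ³`. -/
def fourierMode (k : Fin 3 → ℤ) (x : Fin 3 → ℝ) : ℂ :=
  Complex.exp (2 * (Real.pi : ℂ) * Complex.I * ∑ i, (k i : ℂ) * (x i : ℂ))

/-- The Littlewood–Paley block `Δ_m f` of the distribution on `𝕋³` with Fourier
coefficients `c`. -/
def LPblock (ρ : ℤ → (Fin 3 → ℝ) → ℝ) (m : ℤ) (c : (Fin 3 → ℤ) → ℂ) (x : Fin 3 → ℝ) : ℂ :=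
  ∑' k : Fin 3 → ℤ, ((ρ m (latR k) : ℝ) : ℂ) * c k * fourierMode k x

/-- The (extended-real-valued) `L^∞` norm of a function on the torus. -/
def supNormE (u : (Fin 3 → ℝ) → ℂ) : ℝ≥0∞ := ⨆ x : Fin 3 → ℝ, (‖u x‖₊ : ℝ≥0∞)

/-- The Besov–Hölder `B^α_{∞,∞}(𝕋³)` norm (extended-real-valued), in terms of
Fourier coefficients: `sup_{m ≥ -1} 2^{mα} ‖Δ_m f‖_{L^∞}`. -/
def besovNorm (ρ : ℤ → (Fin 3 → ℝ) → ℝ) (α : ℝ) (c : (Fin 3 → ℤ) → ℂ) : ℝ≥0∞ :=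
  ⨆ m : ℤ, if -1 ≤ m then
    ENNReal.ofReal ((2 : ℝ) ^ ((m : ℝ) * α)) * supNormE (LPblock ρ m c) else 0

/-- Fourier coefficients of the Bony paraproduct `f ≺ g = Σ_{m₁+2 ≤ m₂} Δ_{m₁}f Δ_{m₂}g`. -/
def paraCoeff (ρ : ℤ → (Fin 3 → ℝ) → ℝ) (c d : (Fin 3 → ℤ) → ℂ) (k : Fin 3 → ℤ) : ℂ :=
  ∑' p : ℤ × ℤ × (Fin 3 → ℤ),
    if -1 ≤ p.1 ∧ p.1 + 2 ≤ p.2.1 then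
      ((ρ p.1 (latR p.2.2) : ℝ) : ℂ) * c p.2.2 *
        ((ρ p.2.1 (latR (k - p.2.2)) : ℝ) : ℂ) * d (k - p.2.2)
    else 0

/-- Fourier coefficients of the resonant product `f ⊙ g = Σ_{|m₁-m₂| ≤ 1} Δ_{m₁}f Δ_{m₂}g`. -/
def resonCoeff (ρ : ℤ → (Fin 3 → ℝ) → ℝ) (c d : (Fin 3 → ℤ) → ℂ) (k : Fin 3 → ℤ) : ℂ :=
  ∑' p : ℤ × ℤ × (Fin 3 → ℤ),
    if -1 ≤ p.1 ∧ -1 ≤ p.2.1 ∧ |p.1 - p.2.1| ≤ 1 then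
      ((ρ p.1 (latR p.2.2) : ℝ) : ℂ) * c p.2.2 *
        ((ρ p.2.1 (latR (k - p.2.2)) : ℝ) : ℂ) * d (k - p.2.2)
    else 0

/-- The Fourier multiplier of the semigroup `P_t = e^{t((i+μ)Δ − 1)}` on `𝕋³`:
`e^{t(−4π²(i+μ)|k|² − 1)}` on the mode `k ∈ ℤ³`. -/
def heatMul (μ t : ℝ) (k : Fin 3 → ℤ) : ℂ :=
  Complex.exp ((t : ℂ) * (-(4 * (Real.pi : ℂ) ^ 2) * (Complex.I + (μ : ℂ)) *
    (∑ i, (k i : ℂ) ^ 2) - (t : ℂ)))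

/-!
On frequencies `‖ξ‖ ∼ R` a Fourier multiplier `Φ(τD)` acts by convolution with an integrable
kernel, and commuting a convolution with multiplication by an `L`-Lipschitz function costs `L`
times the first moment of that kernel. On these frequencies `Φ(τξ) = (τR)^{-2N} G(τξ) θ(ξ/R)` with
`G` and `θ` Schwartz; this factorization gains any negative power of `τR`, so that the commutator
of `Φ(τD)` with an `L`-Lipschitz function is bounded by `L τ^{-κ} R^{-1-κ}` for every `κ ≥ 0`.

Since `α < 1`, Bernstein's inequality and a geometric sum show that the low-frequency part
`S_{n-1}u` is Lipschitz with constant `2^{n(1-α)} ‖u‖_{C^α}`. The commutator is the sum over `n` of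
the commutators with `S_{n-1}u` applied to `Δ_n v`; each of these has frequencies `∼ 2^n`, so `Δ_m`
sees only the terms with `|n - m| ≤ 4`. Taking `κ = 2δ`, `τ = √t` and `R = 2^n` gives the estimate.
-/

open Set Filter Topology MeasureTheory FourierTransform SchwartzMap
open scoped NNReal BoundedContinuousFunction

section SchwartzFunctions

variable {E : Type*} [NormedAddCommGroup E] [InnerProductSpace ℝ E]

lemma one_add_pow_mul_exp_neg_mul_sq_le {a : ℝ} (ha : 0 < a) (n : ℕ) {r : ℝ} (hr : 0 ≤ r) :
    (1 + r) ^ n * Real.exp (-a * r ^ 2) ≤ n.factorial * Real.exp (1 + 1 / (4 * a)) := by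
  have hpow : (1 + r) ^ n ≤ n.factorial * Real.exp (1 + r) := by
    have := Real.pow_div_factorial_le_exp (1 + r) (by positivity) n
    rwa [div_le_iff₀' (by positivity)] at this
  have hsq : 1 + r + -a * r ^ 2 ≤ 1 + 1 / (4 * a) := by
    have h : 0 ≤ a * (r - 1 / (2 * a)) ^ 2 := by positivity
    have hexpand : a * (r - 1 / (2 * a)) ^ 2 = a * r ^ 2 - r + 1 / (4 * a) := by
      field_simp
      ring
    linarith
  calc (1 + r) ^ n * Real.exp (-a * r ^ 2)
      ≤ n.factorial * Real.exp (1 + r) * Real.exp (-a * r ^ 2) := by gcongr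
    _ = n.factorial * Real.exp (1 + r + -a * r ^ 2) := by rw [mul_assoc, ← Real.exp_add]
    _ ≤ n.factorial * Real.exp (1 + 1 / (4 * a)) := by gcongr

lemma iteratedDeriv_cexp_mul_ofReal (w : ℂ) (n : ℕ) :
    iteratedDeriv n (fun r : ℝ => Complex.exp (w * r)) =
      fun r : ℝ => w ^ n * Complex.exp (w * r) := by
  induction n with
  | zero => simp
  | succ n ih =>
    rw [iteratedDeriv_succ, ih]
    funext r
    have h : HasDerivAt (fun r : ℝ => Complex.exp (w * r)) (Complex.exp (w * r) * (w * 1)) r :=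
      ((Complex.ofRealCLM.hasDerivAt (x := r)).const_mul w).cexp
    rw [(h.const_mul (w ^ n)).deriv]
    ring

lemma contDiff_cexp_mul_ofReal (w : ℂ) {n : WithTop ℕ∞} :
    ContDiff ℝ n (fun r : ℝ => Complex.exp (w * r)) :=
  (contDiff_const.mul Complex.ofRealCLM.contDiff).cexp

lemma exists_norm_iteratedFDeriv_cexp_mul_norm_sq_le (w : ℂ) (n : ℕ) :
    ∃ (C : ℝ) (k : ℕ), 0 ≤ C ∧ ∀ x : E,
      ‖iteratedFDeriv ℝ n (fun x : E => Complex.exp (w * (‖x‖ ^ 2 : ℝ))) x‖ ≤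
        C * (1 + ‖x‖) ^ k * Real.exp (w.re * ‖x‖ ^ 2) := by
  obtain ⟨k, K, -, hK⟩ :=
    (Function.hasTemperateGrowth_norm_sq E).norm_iteratedFDeriv_le_uniform n
  set K' : ℝ := max 1 K
  set W : ℝ := max 1 ‖w‖
  refine ⟨n.factorial * W ^ n * K' ^ n, k * n, by positivity, fun x => ?_⟩
  have hx : 1 ≤ 1 + ‖x‖ := by linarith [norm_nonneg x]
  have hD : 1 ≤ K' * (1 + ‖x‖) ^ k :=
    one_le_mul_of_one_le_of_one_le (le_max_left _ _) (one_le_pow₀ hx)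
  have hexp : ∀ i ≤ n, ‖iteratedFDeriv ℝ i (fun r : ℝ => Complex.exp (w * r)) (‖x‖ ^ 2)‖ ≤
      W ^ n * Real.exp (w.re * ‖x‖ ^ 2) := fun i hi => by
    rw [norm_iteratedFDeriv_eq_norm_iteratedDeriv, iteratedDeriv_cexp_mul_ofReal, norm_mul,
      norm_pow, Complex.norm_exp, Complex.re_mul_ofReal]
    gcongr
    exact (pow_le_pow_left₀ (norm_nonneg w) (le_max_right _ _) i).trans
      (pow_le_pow_right₀ (le_max_left _ _) hi)
  have hsq : ∀ i, 1 ≤ i → i ≤ n →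
      ‖iteratedFDeriv ℝ i (fun x : E => ‖x‖ ^ 2) x‖ ≤ (K' * (1 + ‖x‖) ^ k) ^ i :=
    fun i h1 hi => calc
      _ ≤ K * (1 + ‖x‖) ^ k := hK i hi x
      _ ≤ K' * (1 + ‖x‖) ^ k := by gcongr; exact le_max_right _ _
      _ ≤ (K' * (1 + ‖x‖) ^ k) ^ i := le_self_pow₀ hD (by omega)
  calc _ ≤ n.factorial * (W ^ n * Real.exp (w.re * ‖x‖ ^ 2)) * (K' * (1 + ‖x‖) ^ k) ^ n :=
        norm_iteratedFDeriv_comp_le (N := (n : WithTop ℕ∞)) (contDiff_cexp_mul_ofReal w)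
          (contDiff_norm_sq ℝ) le_rfl x hexp hsq
    _ = _ := by
        rw [mul_pow, ← pow_mul]
        ring

/-- The Gaussian `x ↦ e^{-w‖x‖²}`, for a complex number `w` with positive real part, as a Schwartz
function. -/
def gaussianSchwartz (w : ℂ) (hw : 0 < w.re) : 𝓢(E, ℂ) where
  toFun x := Complex.exp (-w * (‖x‖ ^ 2 : ℝ))
  smooth' := (contDiff_cexp_mul_ofReal (-w)).comp (contDiff_norm_sq ℝ)
  decay' p n := by
    obtain ⟨C, k, hC, h⟩ := exists_norm_iteratedFDeriv_cexp_mul_norm_sq_le (E := E) (-w) n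
    refine ⟨C * ((p + k).factorial * Real.exp (1 + 1 / (4 * w.re))), fun x => ?_⟩
    have hp : ‖x‖ ^ p ≤ (1 + ‖x‖) ^ p := by gcongr; linarith
    calc _ ≤ (1 + ‖x‖) ^ p * (C * (1 + ‖x‖) ^ k * Real.exp (-w.re * ‖x‖ ^ 2)) := by
          gcongr
          exact h x
      _ = C * ((1 + ‖x‖) ^ (p + k) * Real.exp (-w.re * ‖x‖ ^ 2)) := by
          rw [pow_add]
          ring
      _ ≤ _ := mul_le_mul_of_nonneg_left
          (one_add_pow_mul_exp_neg_mul_sq_le hw _ (norm_nonneg x)) hC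

lemma gaussianSchwartz_apply (w : ℂ) (hw : 0 < w.re) (x : E) :
    gaussianSchwartz w hw x = Complex.exp (-w * (‖x‖ ^ 2 : ℝ)) :=
  rfl

section Extension

variable {V : Type*} [NormedAddCommGroup V] [NormedSpace ℝ V] [FiniteDimensional ℝ V]

open scoped Manifold in
lemma exists_contDiff_eqOn_one_tsupport_subset {K U : Set V} (hK : IsCompact K)
    (hU : IsOpen U) (hKU : K ⊆ U) :
    ∃ χ : V → ℝ, ContDiff ℝ (⊤ : ℕ∞) χ ∧ HasCompactSupport χ ∧ EqOn χ 1 K ∧ tsupport χ ⊆ U := by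
  obtain ⟨L, hL, hKL, hLU⟩ := exists_compact_between hK hU hKU
  obtain ⟨χ, hχK, hχL, -⟩ :=
    exists_contMDiffMap_one_nhds_of_subset_interior (n := ⊤) 𝓘(ℝ, V) hK.isClosed hKL
  have htsupp : tsupport χ ⊆ L :=
    closure_minimal (fun x hx => by_contra fun hxL => hx (hχL x hxL)) hL.isClosed
  exact ⟨χ, χ.contMDiff.contDiff, hL.of_isClosed_subset (isClosed_tsupport _) htsupp,
    fun x hx => hχK.self_of_nhdsSet x hx, htsupp.trans hLU⟩

lemma exists_schwartzMap_eqOn {F : Type*} [NormedAddCommGroup F] [NormedSpace ℝ F] {K U : Set V}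
    (hK : IsCompact K) (hU : IsOpen U) (hKU : K ⊆ U) {f : V → F}
    (hf : ContDiffOn ℝ (⊤ : ℕ∞) f U) :
    ∃ Φ : 𝓢(V, F), EqOn Φ f K := by
  obtain ⟨χ, hχ, hcompact, hχK, hχU⟩ := exists_contDiff_eqOn_one_tsupport_subset hK hU hKU
  have hsmooth : ContDiff ℝ (⊤ : ℕ∞) fun x => χ x • f x := contDiff_iff_contDiffAt.2 fun x => by
    by_cases hx : x ∈ tsupport χ
    · exact hχ.contDiffAt.smul (hf.contDiffAt (hU.mem_nhds (hχU hx)))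
    · refine contDiffAt_const (c := (0 : F)) |>.congr_of_eventuallyEq ?_
      filter_upwards [notMem_tsupport_iff_eventuallyEq.1 hx] with y hy
      simp [hy]
  refine ⟨(hcompact.smul_right (f' := f)).toSchwartzMap hsmooth, fun x hx => ?_⟩
  simp [hχK hx]

end Extension

lemma exists_schwartzMap_eq_inv_norm_sq_pow [FiniteDimensional ℝ E] {a : ℝ} (ha : 0 < a) (b : ℝ)
    (N : ℕ) :
    ∃ θ : 𝓢(E, ℂ), ∀ x, a ≤ ‖x‖ → ‖x‖ ≤ b → θ x = ((((‖x‖ ^ 2) ^ N)⁻¹ : ℝ) : ℂ) := by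
  have hK : IsCompact {x : E | a ≤ ‖x‖ ∧ ‖x‖ ≤ b} :=
    (isCompact_closedBall (0 : E) b).of_isClosed_subset
      ((isClosed_le continuous_const continuous_norm).inter
        (isClosed_le continuous_norm continuous_const)) fun x hx => by simpa using hx.2
  have hsmooth : ContDiffOn ℝ (⊤ : ℕ∞) (fun x : E => ((((‖x‖ ^ 2) ^ N)⁻¹ : ℝ) : ℂ)) {0}ᶜ := by
    refine Complex.ofRealCLM.contDiff.comp_contDiffOn
      (((contDiff_norm_sq ℝ).pow N).contDiffOn.inv fun x hx => ?_)
    have : x ≠ 0 := hx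
    positivity
  obtain ⟨θ, hθ⟩ := exists_schwartzMap_eqOn hK isOpen_compl_singleton
    (fun x hx => norm_pos_iff.1 (ha.trans_le hx.1)) hsmooth
  exact ⟨θ, fun x h1 h2 => hθ ⟨h1, h2⟩⟩

lemma inv_pow_mul_one_add_le_rpow_neg {κ s : ℝ} (hs : 1 ≤ s) :
    ((s ^ 2) ^ (⌈κ⌉₊ + 1))⁻¹ * (1 + s) ≤ 2 * s ^ (-κ) := by
  have hs0 : 0 < s := by linarith
  calc ((s ^ 2) ^ (⌈κ⌉₊ + 1))⁻¹ * (1 + s) ≤ (s ^ (⌈κ⌉₊ + 1))⁻¹ * (2 * s) := by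
        gcongr
        · nlinarith
        · linarith
    _ = 2 * s ^ (-(⌈κ⌉₊ : ℝ)) := by
        rw [Real.rpow_neg hs0.le, Real.rpow_natCast, pow_succ]
        field_simp
    _ ≤ 2 * s ^ (-κ) := by
        gcongr
        · exact Nat.le_ceil κ

lemma exists_schwartzMap_factorization_of_annulus [FiniteDimensional ℝ E] (Φ : 𝓢(E, ℂ)) {a : ℝ}
    (ha : 0 < a) (b : ℝ) (N : ℕ) :
    ∃ G θ : 𝓢(E, ℂ), ∀ ⦃τ R : ℝ⦄, 0 < τ → 0 < R → ∀ ξ, ‖ξ‖ ∈ Icc (a * R) (b * R) →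
      Φ (τ • ξ) = ((((τ * R) ^ 2) ^ N)⁻¹ : ℝ) * (G (τ • ξ) * θ (R⁻¹ • ξ)) := by
  obtain ⟨θ, hθ⟩ := exists_schwartzMap_eq_inv_norm_sq_pow (E := E) ha b N
  refine ⟨SchwartzMap.smulLeftCLM ℂ ((fun x : E => ‖x‖ ^ 2) ^ N) Φ, θ, fun τ R hτ hR ξ hξ => ?_⟩
  have hnorm : ‖R⁻¹ • ξ‖ = ‖ξ‖ / R := by
    rw [norm_smul, norm_inv, Real.norm_of_nonneg hR.le, inv_mul_eq_div]
  have hξ0 : 0 < ‖ξ‖ := (mul_pos ha hR).trans_le hξ.1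
  have hpow : (((τ * R) ^ 2) ^ N)⁻¹ * (‖τ • ξ‖ ^ 2) ^ N * ((‖R⁻¹ • ξ‖ ^ 2) ^ N)⁻¹ = 1 := by
    have hbase : ((τ * R) ^ 2)⁻¹ * (τ * ‖ξ‖) ^ 2 * ((‖ξ‖ / R) ^ 2)⁻¹ = 1 := by field_simp
    rw [hnorm, norm_smul, Real.norm_of_nonneg hτ.le, ← one_pow N, ← hbase]
    simp only [mul_pow, inv_pow]
  rw [SchwartzMap.smulLeftCLM_apply_apply ((Function.hasTemperateGrowth_norm_sq E).pow N),
    hθ (R⁻¹ • ξ) (by rw [hnorm]; exact (le_div_iff₀ hR).2 hξ.1)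
      (by rw [hnorm]; exact (div_le_iff₀ hR).2 hξ.2), Complex.real_smul, Pi.pow_apply]
  have hpowC := congrArg Complex.ofReal hpow
  push_cast at hpowC ⊢
  linear_combination (-Φ (τ • ξ)) * hpowC

end SchwartzFunctions

section TrigonometricPolynomials

/-- Trigonometric polynomials with frequencies in `Λ`, encoded by their Fourier coefficients. The
product of the group algebra is the convolution of coefficients, that is, the pointwise product of
functions. -/
abbrev TrigPoly (Λ : Type*) := AddMonoidAlgebra ℂ Λ

namespace TrigPoly

variable {Λ E : Type*}

section Multiplier

/-- The Fourier multiplier with symbol `σ`, acting on trigonometric polynomials. -/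
def multiplier (σ : Λ → ℂ) : TrigPoly Λ →ₗ[ℂ] TrigPoly Λ where
  toFun f := .ofCoeff (Finsupp.onFinset f.coeff.support (fun k => σ k * f.coeff k) fun k hk => by
    simpa using right_ne_zero_of_mul hk)
  map_add' f g := by ext; simp [mul_add]
  map_smul' a f := by ext; simp [mul_left_comm]

@[simp]
lemma coeff_multiplier (σ : Λ → ℂ) (f : TrigPoly Λ) (k : Λ) :
    (multiplier σ f).coeff k = σ k * f.coeff k :=
  rfl

@[simp]
lemma multiplier_single (σ : Λ → ℂ) (k : Λ) (a : ℂ) :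
    multiplier σ (.single k a) = .single k (σ k * a) := by
  classical
  ext l
  by_cases h : k = l
  · subst h; simp
  · simp [Finsupp.single_eq_of_ne' h]

lemma multiplier_congr {σ τ : Λ → ℂ} {f : TrigPoly Λ} (h : ∀ k, f.coeff k ≠ 0 → σ k = τ k) :
    multiplier σ f = multiplier τ f := by
  ext k
  by_cases hk : f.coeff k = 0
  · simp [hk]
  · simp [h k hk]

lemma multiplier_mul (σ τ : Λ → ℂ) (f : TrigPoly Λ) :
    multiplier (σ * τ) f = multiplier σ (multiplier τ f) := by
  ext k
  simp [mul_assoc]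

lemma multiplier_smul (a : ℂ) (σ : Λ → ℂ) (f : TrigPoly Λ) :
    multiplier (a • σ) f = a • multiplier σ f := by
  ext k
  simp [mul_assoc]

variable [AddMonoid Λ]

/-- The commutator `[σ(D), f] g = σ(D)(f g) - f σ(D)g` of a Fourier multiplier and a multiplication
operator. -/
def commutator (σ : Λ → ℂ) (f g : TrigPoly Λ) : TrigPoly Λ :=
  multiplier σ (f * g) - f * multiplier σ g

lemma commutator_mul (σ τ : Λ → ℂ) (f g : TrigPoly Λ) :
    commutator (σ * τ) f g =
      multiplier σ (commutator τ f g) + commutator σ f (multiplier τ g) := by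
  simp only [commutator, multiplier_mul, map_sub]
  abel

lemma commutator_smul (a : ℂ) (σ : Λ → ℂ) (f g : TrigPoly Λ) :
    commutator (a • σ) f g = a • commutator σ f g := by
  simp only [commutator, multiplier_smul, mul_smul_comm, smul_sub]

lemma commutator_congr {σ τ : Λ → ℂ} {f g : TrigPoly Λ}
    (hg : ∀ k, g.coeff k ≠ 0 → σ k = τ k) (hfg : ∀ k, (f * g).coeff k ≠ 0 → σ k = τ k) :
    commutator σ f g = commutator τ f g := by
  rw [commutator, commutator, multiplier_congr hg, multiplier_congr hfg]

end Multiplier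

variable [AddCommGroup Λ]

lemma coeff_mul_eq_sum {f g : TrigPoly Λ} {s : Finset Λ} (hs : f.coeff.support ⊆ s) (k : Λ) :
    (f * g).coeff k = ∑ l ∈ s, f.coeff l * g.coeff (k - l) := by
  rw [AddMonoidAlgebra.coeff_mul_apply_left, Finsupp.sum_of_support_subset _ hs _ (by simp)]
  simp only [neg_add_eq_sub]

lemma exists_coeff_ne_zero_of_coeff_mul_ne_zero {f g : TrigPoly Λ} {k : Λ}
    (h : (f * g).coeff k ≠ 0) : ∃ l, f.coeff l ≠ 0 ∧ g.coeff (k - l) ≠ 0 := by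
  rw [coeff_mul_eq_sum subset_rfl] at h
  obtain ⟨l, -, hl⟩ := Finset.exists_ne_zero_of_sum_ne_zero h
  exact ⟨l, left_ne_zero_of_mul hl, right_ne_zero_of_mul hl⟩

variable [NormedAddCommGroup E] [InnerProductSpace ℝ E] (φ : Λ →+ E)

/-- The realization of a trigonometric polynomial as a bounded continuous function on `E`, the
coefficient at `k` being attached to the mode `x ↦ e^{2πi⟪x, φ k⟫}`. -/
def toBCF : TrigPoly Λ →ₐ[ℂ] (E →ᵇ ℂ) :=
  (BoundedContinuousFunction.charAlgHom (L := innerₗ E) Real.continuous_fourierChar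
    (by simpa only [innerₗ_apply_apply] using continuous_inner)).comp
    (AddMonoidAlgebra.mapDomainAlgHom ℂ ℂ φ)

lemma toBCF_single_apply (k : Λ) (a : ℂ) (x : E) :
    toBCF φ (.single k a) x = a * 𝐞 (inner ℝ x (φ k)) := by
  simp only [toBCF, AlgHom.comp_apply, AddMonoidAlgebra.mapDomainAlgHom_apply,
    AddMonoidAlgebra.mapDomain_single, BoundedContinuousFunction.charAlgHom_apply]
  simp

lemma toBCF_apply (f : TrigPoly Λ) (x : E) :
    toBCF φ f x = f.coeff.sum fun k a => a * 𝐞 (inner ℝ x (φ k)) := by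
  induction f using AddMonoidAlgebra.induction_linear with
  | zero => simp
  | add f g hf hg =>
    rw [map_add, BoundedContinuousFunction.add_apply, hf, hg, AddMonoidAlgebra.coeff_add,
      Finsupp.sum_add_index' (fun _ => zero_mul _) fun _ _ _ => add_mul _ _ _]
  | single k a =>
    rw [toBCF_single_apply, AddMonoidAlgebra.coeff_single, Finsupp.sum_single_index (zero_mul _)]

/-- The derivative of a trigonometric polynomial in the direction `v`. -/
def directionalDeriv (v : E) : TrigPoly Λ →ₗ[ℂ] TrigPoly Λ :=
  multiplier fun k => 2 * Real.pi * Complex.I * (inner ℝ v (φ k) : ℝ)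

lemma hasDerivAt_toBCF_line (f : TrigPoly Λ) (x v : E) (s : ℝ) :
    HasDerivAt (fun s : ℝ => toBCF φ f (x + s • v))
      (toBCF φ (directionalDeriv φ v f) (x + s • v)) s := by
  induction f using AddMonoidAlgebra.induction_linear with
  | zero => simpa using hasDerivAt_const s (0 : ℂ)
  | add f g hf hg => simpa only [map_add, BoundedContinuousFunction.add_apply] using hf.fun_add hg
  | single k a =>
    have hphase : HasDerivAt (fun s : ℝ => inner ℝ (x + s • v) (φ k)) (inner ℝ v (φ k)) s := by
      simpa [inner_add_left, inner_smul_left] using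
        ((hasDerivAt_id s).mul_const (inner ℝ v (φ k))).const_add (inner ℝ x (φ k))
    simp only [directionalDeriv, multiplier_single, toBCF_single_apply]
    refine (((Real.hasDerivAt_fourierChar _).scomp s hphase).const_mul a).congr_deriv ?_
    rw [Complex.real_smul]
    ring

lemma norm_directionalDeriv_le_sum {ι : Type*} [Fintype ι] (b : OrthonormalBasis ι ℝ E)
    (v : E) (f : TrigPoly Λ) :
    ‖toBCF φ (directionalDeriv φ v f)‖ ≤ ‖v‖ * ∑ i, ‖toBCF φ (directionalDeriv φ (b i) f)‖ := by
  have hexpand : directionalDeriv φ v f =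
      ∑ i, (inner ℝ (b i) v : ℂ) • directionalDeriv φ (b i) f := by
    ext k
    simp only [directionalDeriv, AddMonoidAlgebra.coeff_sum, Finsupp.finsetSum_apply,
      AddMonoidAlgebra.coeff_smul_apply, coeff_multiplier, smul_eq_mul]
    rw [← b.sum_inner_mul_inner v (φ k)]
    push_cast
    rw [Finset.mul_sum, Finset.sum_mul]
    refine Finset.sum_congr rfl fun i _ => ?_
    rw [real_inner_comm]
    ring
  rw [hexpand, map_sum, Finset.mul_sum]
  refine (norm_sum_le _ _).trans (Finset.sum_le_sum fun i _ => ?_)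
  rw [map_smul, norm_smul, Complex.norm_real]
  gcongr
  simpa using norm_inner_le_norm (𝕜 := ℝ) (b i) v

lemma lipschitzWith_toBCF_of_directionalDeriv_le {f : TrigPoly Λ} {L : ℝ≥0}
    (hL : ∀ v, ‖toBCF φ (directionalDeriv φ v f)‖ ≤ L * ‖v‖) : LipschitzWith L (toBCF φ f) := by
  refine LipschitzWith.of_dist_le_mul fun y x => ?_
  have h := norm_image_sub_le_of_norm_deriv_le_segment_01'
    (fun s _ => (hasDerivAt_toBCF_line φ f x (y - x) s).hasDerivWithinAt)
    fun s _ => ((toBCF φ _).norm_coe_le_norm _).trans (hL (y - x))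
  simpa [dist_eq_norm] using h

lemma lipschitzWith_toBCF_sum {ι : Type*} {s : Finset ι} {L : ι → ℝ≥0} {f : ι → TrigPoly Λ}
    (h : ∀ i ∈ s, LipschitzWith (L i) (toBCF φ (f i))) :
    LipschitzWith (∑ i ∈ s, L i) (toBCF φ (∑ i ∈ s, f i)) := by
  classical
  induction s using Finset.induction_on with
  | empty => simp
  | insert i s hi ih =>
    rw [Finset.sum_insert hi, Finset.sum_insert hi, map_add]
    exact (h i (Finset.mem_insert_self i s)).add
      (ih fun j hj => h j (Finset.mem_insert_of_mem hj))

/-- At frequencies of size comparable to `R`, up to the ratios `a` and `b`, the commutator of `σ(D)`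
with multiplication by an `L`-Lipschitz function is bounded on `L^∞` by `B R * L`. -/
def HasAnnularCommutatorBound (a b : ℝ) (B : ℝ → ℝ) (σ : Λ → ℂ) : Prop :=
  ∀ ⦃R : ℝ⦄, 0 < R → ∀ ⦃L : ℝ≥0⦄ ⦃f g : TrigPoly Λ⦄, LipschitzWith L (toBCF φ f) →
    (∀ k, g.coeff k ≠ 0 → ‖φ k‖ ∈ Icc (a * R) (b * R)) →
    (∀ k, (f * g).coeff k ≠ 0 → ‖φ k‖ ∈ Icc (a * R) (b * R)) →
    ‖toBCF φ (commutator σ f g)‖ ≤ B R * L * ‖toBCF φ g‖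

lemma HasAnnularCommutatorBound.smul {a b : ℝ} {B : ℝ → ℝ} {σ : Λ → ℂ}
    (hσ : HasAnnularCommutatorBound φ a b B σ) {z : ℂ} (hz : ‖z‖ ≤ 1) :
    HasAnnularCommutatorBound φ a b B (z • σ) := by
  intro R hR L f g hf hg hfg
  rw [commutator_smul, map_smul, norm_smul]
  exact (mul_le_of_le_one_left (norm_nonneg _) hz).trans (hσ hR hf hg hfg)

variable [FiniteDimensional ℝ E] [MeasurableSpace E] [BorelSpace E]

section Kernel

/-- The `L¹` norm of the convolution kernel `𝓕 Φ`; it bounds `Φ(r D)` on `L^∞` for every `r`. -/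
def kernelL1 (Φ : 𝓢(E, ℂ)) : ℝ := ∫ w, ‖𝓕 Φ w‖

/-- The first absolute moment of the convolution kernel `𝓕 Φ`; it bounds the commutator of `Φ(D)`
with multiplication by a `1`-Lipschitz function on `L^∞`. -/
def kernelMoment (Φ : 𝓢(E, ℂ)) : ℝ := ∫ w, ‖w‖ * ‖𝓕 Φ w‖

lemma kernelL1_nonneg (Φ : 𝓢(E, ℂ)) : 0 ≤ kernelL1 Φ :=
  integral_nonneg fun _ => norm_nonneg _

lemma kernelMoment_nonneg (Φ : 𝓢(E, ℂ)) : 0 ≤ kernelMoment Φ :=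
  integral_nonneg fun _ => by positivity

variable (Φ : 𝓢(E, ℂ)) (r : ℝ)

lemma integrable_fourier_mul_toBCF (f : TrigPoly Λ) (x : E) :
    Integrable fun w => 𝓕 Φ w * toBCF φ f (x + r • w) :=
  (𝓕 Φ).integrable.mul_bdd (c := ‖toBCF φ f‖)
    ((toBCF φ f).continuous.comp (by fun_prop)).aestronglyMeasurable
    (.of_forall fun _ => (toBCF φ f).norm_coe_le_norm _)

lemma toBCF_multiplier_schwartz_apply (f : TrigPoly Λ) (x : E) :
    toBCF φ (multiplier (fun k => Φ (r • φ k)) f) x = ∫ w, 𝓕 Φ w * toBCF φ f (x + r • w) := by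
  induction f using AddMonoidAlgebra.induction_linear with
  | zero => simp
  | add f g hf hg =>
    simp only [map_add, BoundedContinuousFunction.add_apply, mul_add, hf, hg]
    exact (integral_add (integrable_fourier_mul_toBCF φ Φ r f x)
      (integrable_fourier_mul_toBCF φ Φ r g x)).symm
  | single k a =>
    have hinv : Φ (r • φ k) = ∫ w, 𝐞 (inner ℝ w (r • φ k)) • 𝓕 Φ w := by
      conv_lhs => rw [← fourierInv_fourier_eq (E := 𝓢(E, ℂ)) (F := 𝓢(E, ℂ)) Φ,
        SchwartzMap.fourierInv_coe, Real.fourierInv_eq]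
    simp only [multiplier_single, toBCF_single_apply, hinv, mul_assoc, ← integral_mul_const]
    refine integral_congr_ae (.of_forall fun w => ?_)
    simp only [inner_add_left, inner_smul_left, inner_smul_right, conj_trivial,
      AddChar.map_add_eq_mul, Circle.coe_mul, Circle.smul_def, smul_eq_mul]
    ring

lemma norm_toBCF_multiplier_schwartz_le (f : TrigPoly Λ) :
    ‖toBCF φ (multiplier (fun k => Φ (r • φ k)) f)‖ ≤ kernelL1 Φ * ‖toBCF φ f‖ := by
  refine (BoundedContinuousFunction.norm_le
    (mul_nonneg (kernelL1_nonneg Φ) (norm_nonneg _))).2 fun x => ?_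
  rw [toBCF_multiplier_schwartz_apply, kernelL1, ← integral_mul_const]
  refine norm_integral_le_of_norm_le ((𝓕 Φ).integrable.norm.mul_const _) (.of_forall fun w => ?_)
  rw [norm_mul]
  gcongr
  exact (toBCF φ f).norm_coe_le_norm _

lemma toBCF_commutator_schwartz_apply (f g : TrigPoly Λ) (x : E) :
    toBCF φ (commutator (fun k => Φ (r • φ k)) f g) x =
      ∫ w, 𝓕 Φ w * ((toBCF φ f (x + r • w) - toBCF φ f x) * toBCF φ g (x + r • w)) := by
  simp only [commutator, map_sub, map_mul, BoundedContinuousFunction.sub_apply,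
    BoundedContinuousFunction.mul_apply, toBCF_multiplier_schwartz_apply]
  rw [← integral_const_mul, ← integral_sub]
  · refine integral_congr_ae (.of_forall fun w => ?_)
    ring
  · simpa only [map_mul, BoundedContinuousFunction.mul_apply] using
      integrable_fourier_mul_toBCF φ Φ r (f * g) x
  · exact (integrable_fourier_mul_toBCF φ Φ r g x).const_mul _

lemma norm_toBCF_commutator_schwartz_le (hr : 0 ≤ r) {L : ℝ≥0} {f : TrigPoly Λ}
    (hf : LipschitzWith L (toBCF φ f)) (g : TrigPoly Λ) :
    ‖toBCF φ (commutator (fun k => Φ (r • φ k)) f g)‖ ≤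
      r * kernelMoment Φ * L * ‖toBCF φ g‖ := by
  have hint : Integrable fun w => ‖w‖ * ‖𝓕 Φ w‖ := by
    simpa only [pow_one] using ((𝓕 Φ).integrable_pow_mul volume 1 :)
  have hM := kernelMoment_nonneg Φ
  refine (BoundedContinuousFunction.norm_le (by positivity)).2 fun x => ?_
  rw [toBCF_commutator_schwartz_apply]
  calc _ ≤ ∫ w, ‖w‖ * ‖𝓕 Φ w‖ * (r * L * ‖toBCF φ g‖) := by
        refine norm_integral_le_of_norm_le (hint.mul_const _) (.of_forall fun w => ?_)
        have hfw : ‖toBCF φ f (x + r • w) - toBCF φ f x‖ ≤ L * (r * ‖w‖) := by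
          simpa [norm_smul, abs_of_nonneg hr] using hf.norm_sub_le (x + r • w) x
        calc _ = ‖𝓕 Φ w‖ * (‖toBCF φ f (x + r • w) - toBCF φ f x‖ *
              ‖toBCF φ g (x + r • w)‖) := by rw [norm_mul, norm_mul]
          _ ≤ ‖𝓕 Φ w‖ * (L * (r * ‖w‖) * ‖toBCF φ g‖) := by
              gcongr
              exact (toBCF φ g).norm_coe_le_norm _
          _ = _ := by ring
    _ = _ := by rw [integral_mul_const, kernelMoment]; ring

end Kernel

section Bernstein

lemma exists_norm_directionalDeriv_le (v : E) :
    ∃ K : ℝ≥0, ∀ (R : ℝ) (f : TrigPoly Λ), 0 < R → (∀ k, f.coeff k ≠ 0 → ‖φ k‖ ≤ R) →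
      ‖toBCF φ (directionalDeriv φ v f)‖ ≤ K * R * ‖toBCF φ f‖ := by
  obtain ⟨Φ, hΦ⟩ := exists_schwartzMap_eqOn (f := fun ξ : E =>
      2 * Real.pi * Complex.I * (inner ℝ v ξ : ℝ)) (isCompact_closedBall 0 1) isOpen_univ
    (subset_univ _)
    (contDiff_const.mul (Complex.ofRealCLM.contDiff.comp (innerSL ℝ v).contDiff)).contDiffOn
  refine ⟨(kernelL1 Φ).toNNReal, fun R f hR hf => ?_⟩
  have hscale : directionalDeriv φ v f = (R : ℂ) • multiplier (fun k => Φ (R⁻¹ • φ k)) f := by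
    rw [← multiplier_smul]
    refine multiplier_congr fun k hk => ?_
    have hball : R⁻¹ • φ k ∈ Metric.closedBall (0 : E) 1 := by
      rw [mem_closedBall_zero_iff, norm_smul, norm_inv, Real.norm_of_nonneg hR.le,
        inv_mul_le_one₀ hR]
      exact hf k hk
    have hR' : (R : ℂ) ≠ 0 := by exact_mod_cast hR.ne'
    rw [Pi.smul_apply, smul_eq_mul, hΦ hball]
    simp only [inner_smul_right, Complex.ofReal_mul, Complex.ofReal_inv]
    field_simp
  rw [Real.coe_toNNReal _ (kernelL1_nonneg Φ), hscale, map_smul, norm_smul, Complex.norm_real,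
    Real.norm_of_nonneg hR.le]
  calc _ ≤ R * (kernelL1 Φ * ‖toBCF φ f‖) := by
        gcongr
        exact norm_toBCF_multiplier_schwartz_le φ Φ R⁻¹ f
    _ = _ := by ring

lemma bernstein_inequality :
    ∃ K : ℝ≥0, ∀ (R : ℝ) (f : TrigPoly Λ), 0 < R → (∀ k, f.coeff k ≠ 0 → ‖φ k‖ ≤ R) →
      LipschitzWith (K * R.toNNReal * ‖toBCF φ f‖₊) (toBCF φ f) := by
  let b := stdOrthonormalBasis ℝ E
  choose K hK using fun i => exists_norm_directionalDeriv_le φ (b i)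
  refine ⟨∑ i, K i, fun R f hR hf => ?_⟩
  refine lipschitzWith_toBCF_of_directionalDeriv_le φ fun v => ?_
  calc _ ≤ ‖v‖ * ∑ i, ‖toBCF φ (directionalDeriv φ (b i) f)‖ :=
        norm_directionalDeriv_le_sum φ b v f
    _ ≤ ‖v‖ * ∑ i, K i * R * ‖toBCF φ f‖ := by
        gcongr with i
        exact hK i R f hR hf
    _ = ((∑ i, K i : ℝ≥0) : ℝ) * R * ‖toBCF φ f‖ * ‖v‖ := by
        push_cast
        rw [← Finset.sum_mul, ← Finset.sum_mul]
        ring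
    _ = _ := by simp [hR.le]

end Bernstein

section AnnularSymbols

lemma norm_toBCF_commutator_schwartz_mul_schwartz_le (Φ Ψ : 𝓢(E, ℂ)) {r s : ℝ} (hr : 0 ≤ r)
    (hs : 0 ≤ s) {L : ℝ≥0} {f : TrigPoly Λ} (hf : LipschitzWith L (toBCF φ f)) (g : TrigPoly Λ) :
    ‖toBCF φ (commutator ((fun k => Φ (r • φ k)) * fun k => Ψ (s • φ k)) f g)‖ ≤
      (kernelL1 Φ * kernelMoment Ψ * s + kernelMoment Φ * kernelL1 Ψ * r) * L * ‖toBCF φ g‖ := by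
  have hΦ := kernelL1_nonneg Φ
  have hΦ' := kernelMoment_nonneg Φ
  rw [commutator_mul, map_add]
  calc _ ≤ kernelL1 Φ * ‖toBCF φ (commutator (fun k => Ψ (s • φ k)) f g)‖ +
        r * kernelMoment Φ * L * ‖toBCF φ (multiplier (fun k => Ψ (s • φ k)) g)‖ :=
        norm_add_le_of_le (norm_toBCF_multiplier_schwartz_le φ Φ r _)
          (norm_toBCF_commutator_schwartz_le φ Φ r hr hf _)
    _ ≤ kernelL1 Φ * (s * kernelMoment Ψ * L * ‖toBCF φ g‖) +
        r * kernelMoment Φ * L * (kernelL1 Ψ * ‖toBCF φ g‖) := by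
        gcongr
        · exact norm_toBCF_commutator_schwartz_le φ Ψ s hs hf g
        · exact norm_toBCF_multiplier_schwartz_le φ Ψ s g
    _ = _ := by ring

lemma exists_hasAnnularCommutatorBound_pow (Φ : 𝓢(E, ℂ)) {a : ℝ} (ha : 0 < a) (b : ℝ) (N : ℕ) :
    ∃ K : ℝ, 0 ≤ K ∧ ∀ ⦃τ : ℝ⦄, 0 < τ → HasAnnularCommutatorBound φ a b
      (fun R => K * R⁻¹ * ((((τ * R) ^ 2) ^ N)⁻¹ * (1 + τ * R))) fun k => Φ (τ • φ k) := by
  obtain ⟨G, θ, hGθ⟩ := exists_schwartzMap_factorization_of_annulus Φ ha b N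
  have hG0 := kernelL1_nonneg G
  have hG1 := kernelMoment_nonneg G
  have hθ0 := kernelL1_nonneg θ
  have hθ1 := kernelMoment_nonneg θ
  refine ⟨kernelL1 G * kernelMoment θ + kernelMoment G * kernelL1 θ, by positivity,
    fun τ hτ R hR L f g hf hg hfg => ?_⟩
  let q : ℝ := (((τ * R) ^ 2) ^ N)⁻¹
  have hfactor : ∀ k, ‖φ k‖ ∈ Icc (a * R) (b * R) → Φ (τ • φ k) =
      ((q : ℂ) • ((fun k => G (τ • φ k)) * fun k => θ (R⁻¹ • φ k))) k :=
    fun k hk => hGθ hτ hR (φ k) hk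
  rw [commutator_congr (fun k hk => hfactor k (hg k hk)) fun k hk => hfactor k (hfg k hk),
    commutator_smul, map_smul, norm_smul, Complex.norm_real, Real.norm_of_nonneg (by positivity)]
  calc _ ≤ q * ((kernelL1 G * kernelMoment θ * R⁻¹ + kernelMoment G * kernelL1 θ * τ) * L *
        ‖toBCF φ g‖) := by
        gcongr
        exact norm_toBCF_commutator_schwartz_mul_schwartz_le φ G θ hτ.le (by positivity) hf g
    _ = R⁻¹ * q * (kernelL1 G * kernelMoment θ + kernelMoment G * kernelL1 θ * (τ * R)) * L *
        ‖toBCF φ g‖ := by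
        field_simp
    _ ≤ R⁻¹ * q * ((kernelL1 G * kernelMoment θ + kernelMoment G * kernelL1 θ) * (1 + τ * R)) * L *
        ‖toBCF φ g‖ := by
        gcongr
        have : 0 ≤ kernelL1 G * kernelMoment θ * (τ * R) + kernelMoment G * kernelL1 θ := by
          positivity
        linarith
    _ = _ := by ring

lemma exists_hasAnnularCommutatorBound_rpow (Φ : 𝓢(E, ℂ)) {a : ℝ} (ha : 0 < a) (b : ℝ) {κ : ℝ}
    (hκ : 0 ≤ κ) :
    ∃ K : ℝ, 0 ≤ K ∧ ∀ ⦃τ : ℝ⦄, 0 < τ → HasAnnularCommutatorBound φ a b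
      (fun R => K * τ ^ (-κ) * R ^ (-(1 + κ))) fun k => Φ (τ • φ k) := by
  obtain ⟨K₀, hK₀, h₀⟩ := exists_hasAnnularCommutatorBound_pow φ Φ ha b 0
  obtain ⟨K₁, hK₁, h₁⟩ := exists_hasAnnularCommutatorBound_pow φ Φ ha b (⌈κ⌉₊ + 1)
  refine ⟨2 * (K₀ + K₁), by positivity, fun τ hτ R hR L f g hf hg hfg => ?_⟩
  have hs : 0 < τ * R := mul_pos hτ hR
  have hscale : R⁻¹ * (τ * R) ^ (-κ) = τ ^ (-κ) * R ^ (-(1 + κ)) := by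
    rw [Real.mul_rpow hτ.le hR.le, neg_add, Real.rpow_add hR, Real.rpow_neg_one]
    ring
  suffices h : ‖toBCF φ (commutator (fun k => Φ (τ • φ k)) f g)‖ ≤
      (K₀ + K₁) * R⁻¹ * (2 * (τ * R) ^ (-κ)) * L * ‖toBCF φ g‖ by
    refine h.trans_eq ?_
    linear_combination 2 * (K₀ + K₁) * L * ‖toBCF φ g‖ * hscale
  rcases le_total (τ * R) 1 with hs1 | hs1
  · have hpow : 1 ≤ (τ * R) ^ (-κ) :=
      Real.one_le_rpow_of_pos_of_le_one_of_nonpos hs hs1 (by linarith)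
    refine (h₀ hτ hR hf hg hfg).trans ?_
    beta_reduce
    rw [pow_zero, inv_one, one_mul]
    gcongr <;> linarith
  · have hdecay := inv_pow_mul_one_add_le_rpow_neg (κ := κ) hs1
    refine (h₁ hτ hR hf hg hfg).trans ?_
    gcongr ?_ * _ * ?_ * _ * _
    linarith

end AnnularSymbols

end TrigPoly

end TrigonometricPolynomials

section LittlewoodPaley

open TrigPoly

/-- The frequency lattice `ℤ³` inside Euclidean space. -/
def latE : (Fin 3 → ℤ) →+ EuclideanSpace ℝ (Fin 3) where
  toFun k := WithLp.toLp 2 (latR k)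
  map_zero' := by ext i; simp [latR]
  map_add' k l := by ext i; simp [latR]

lemma enorm3_ofLp (ξ : EuclideanSpace ℝ (Fin 3)) : enorm3 ξ.ofLp = ‖ξ‖ := by
  simp [enorm3, EuclideanSpace.norm_eq]

lemma finite_setOf_norm_latE_lt (R : ℝ) : {k : Fin 3 → ℤ | ‖latE k‖ < R}.Finite := by
  refine (finite_Icc (fun _ : Fin 3 => -⌈R⌉) fun _ => ⌈R⌉).subset fun k hk => ?_
  have hcoord : ∀ i, |k i| ≤ ⌈R⌉ := fun i => by
    have h : |(k i : ℝ)| ≤ ⌈R⌉ :=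
      (PiLp.norm_apply_le (latE k) i).trans (le_of_lt hk |>.trans (Int.le_ceil R))
    exact_mod_cast h
  exact ⟨fun i => (abs_le.1 (hcoord i)).1, fun i => (abs_le.1 (hcoord i)).2⟩

/-- The lattice points in the ball of radius `8/3 * 2^M`, which contains the frequencies of all the
blocks `Δ_m` with `m ≤ M`. -/
def dyadicBall (M : ℤ) : Finset (Fin 3 → ℤ) :=
  (finite_setOf_norm_latE_lt (8 / 3 * (2 : ℝ) ^ M)).toFinset

lemma exists_schwartzMap_eq_comp_ofLp {f : (Fin 3 → ℝ) → ℝ} (hf : ContDiff ℝ (⊤ : ℕ∞) f) {R : ℝ}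
    (hR : ∀ x, f x ≠ 0 → enorm3 x ≤ R) :
    ∃ Φ : 𝓢(EuclideanSpace ℝ (Fin 3), ℂ), ∀ ξ, Φ ξ = f ξ.ofLp := by
  have hsmooth : ContDiff ℝ (⊤ : ℕ∞) fun ξ : EuclideanSpace ℝ (Fin 3) => (f ξ.ofLp : ℂ) :=
    Complex.ofRealCLM.contDiff.comp
      (hf.comp (EuclideanSpace.equiv (Fin 3) ℝ).toContinuousLinearMap.contDiff)
  have hcompact : HasCompactSupport fun ξ : EuclideanSpace ℝ (Fin 3) => (f ξ.ofLp : ℂ) := by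
    refine .of_support_subset_isCompact
      (isCompact_closedBall (0 : EuclideanSpace ℝ (Fin 3)) R) fun ξ hξ => ?_
    rw [mem_closedBall_zero_iff, ← enorm3_ofLp]
    exact hR _ (Complex.ofReal_ne_zero.1 hξ)
  exact ⟨hcompact.toSchwartzMap hsmooth, fun _ => rfl⟩

/-- The symbol of the Littlewood–Paley block `Δ_m` on the lattice. -/
def blockSymbol (ρ : ℤ → (Fin 3 → ℝ) → ℝ) (m : ℤ) (k : Fin 3 → ℤ) : ℂ := ρ m (latR k)

lemma blockSymbol_ne_zero_iff {ρ : ℤ → (Fin 3 → ℝ) → ℝ} {m : ℤ} {k : Fin 3 → ℤ} :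
    blockSymbol ρ m k ≠ 0 ↔ ρ m (latE k).ofLp ≠ 0 :=
  Complex.ofReal_ne_zero

namespace IsDyadicPartition

variable {ρ : ℤ → (Fin 3 → ℝ) → ℝ} (hρ : IsDyadicPartition ρ) {m n : ℤ} {k : Fin 3 → ℤ}

include hρ

lemma neg_one_le_of_blockSymbol_ne_zero (h : blockSymbol ρ m k ≠ 0) : -1 ≤ m := by
  obtain ⟨-, -, -, hzero, -⟩ := hρ
  by_contra! hm
  exact h (by simp [blockSymbol, hzero m hm])

lemma norm_latE_mem_of_blockSymbol_ne_zero (hm : 0 ≤ m) (h : blockSymbol ρ m k ≠ 0) :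
    ‖latE k‖ ∈ Ico (3 / 4 * (2 : ℝ) ^ m) (8 / 3 * (2 : ℝ) ^ m) := by
  obtain ⟨-, -, -, -, -, hsupp, hscale, -⟩ := hρ
  rw [blockSymbol_ne_zero_iff, hscale m hm, ← WithLp.ofLp_smul] at h
  have hmem := hsupp h
  have h2m : (0 : ℝ) < 2 ^ m := by positivity
  rwa [mem_ofPred_eq, enorm3_ofLp, norm_smul, zpow_neg, Real.norm_of_nonneg (by positivity),
    ← div_eq_inv_mul, le_div_iff₀ h2m, div_lt_iff₀ h2m] at hmem

lemma norm_latE_lt_of_blockSymbol_ne_zero (h : blockSymbol ρ m k ≠ 0) :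
    ‖latE k‖ < 8 / 3 * (2 : ℝ) ^ m := by
  rcases (hρ.neg_one_le_of_blockSymbol_ne_zero h).eq_or_lt with rfl | hm
  · obtain ⟨-, -, -, -, hsupp, -⟩ := hρ
    have hmem := hsupp (blockSymbol_ne_zero_iff.1 h)
    rw [mem_ofPred_eq, enorm3_ofLp] at hmem
    norm_num
    linarith
  · exact (hρ.norm_latE_mem_of_blockSymbol_ne_zero (by omega) h).2

lemma exists_norm_toBCF_multiplier_blockSymbol_le :
    ∃ M : ℝ, 0 ≤ M ∧ ∀ m f,
      ‖toBCF latE (multiplier (blockSymbol ρ m) f)‖ ≤ M * ‖toBCF latE f‖ := by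
  obtain ⟨hsmooth, -, -, hneg, hsupp, hsupp', hscale, -⟩ := hρ
  obtain ⟨Φ, hΦ⟩ := exists_schwartzMap_eq_comp_ofLp (hsmooth (-1)) fun x hx => (hsupp hx).le
  obtain ⟨Ψ, hΨ⟩ := exists_schwartzMap_eq_comp_ofLp (hsmooth 0) fun x hx => (hsupp' hx).2.le
  have hM₁ := kernelL1_nonneg Φ
  have hM₂ := kernelL1_nonneg Ψ
  refine ⟨kernelL1 Φ + kernelL1 Ψ, by positivity, fun m f => ?_⟩
  rcases lt_trichotomy m (-1) with hm | rfl | hm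
  · have hzero : blockSymbol ρ m = (0 : ℂ) • 1 := by
      funext k
      simp [blockSymbol, hneg m hm]
    rw [hzero, multiplier_smul, zero_smul, map_zero, norm_zero]
    positivity
  · have hsymbol : blockSymbol ρ (-1) = fun k => Φ ((1 : ℝ) • latE k) := by
      funext k
      rw [hΦ, one_smul]
      rfl
    rw [hsymbol]
    refine (norm_toBCF_multiplier_schwartz_le latE Φ 1 f).trans ?_
    gcongr
    linarith
  · have hsymbol : blockSymbol ρ m = fun k => Ψ ((2 : ℝ) ^ (-m) • latE k) := by
      funext k
      rw [hΨ, blockSymbol, hscale m (by omega)]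
      rfl
    rw [hsymbol]
    refine (norm_toBCF_multiplier_schwartz_le latE Ψ _ f).trans ?_
    gcongr
    linarith

/-- The Littlewood–Paley block `Δ_m` of the distribution with Fourier coefficients `c`, as a
trigonometric polynomial. -/
def block (m : ℤ) (c : (Fin 3 → ℤ) → ℂ) : TrigPoly (Fin 3 → ℤ) :=
  .ofCoeff (Finsupp.ofSupportFinite (fun k => blockSymbol ρ m k * c k)
    ((finite_setOf_norm_latE_lt _).subset fun _ hk =>
      hρ.norm_latE_lt_of_blockSymbol_ne_zero (left_ne_zero_of_mul hk)))

@[simp]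
lemma coeff_block (m : ℤ) (c : (Fin 3 → ℤ) → ℂ) (k : Fin 3 → ℤ) :
    (hρ.block m c).coeff k = blockSymbol ρ m k * c k :=
  rfl

lemma block_mul (m : ℤ) (σ c : (Fin 3 → ℤ) → ℂ) :
    hρ.block m (fun k => σ k * c k) = multiplier σ (hρ.block m c) := by
  ext k
  simp [mul_left_comm]

/-- The low-frequency part `S_{n-1} = ∑_{j ≤ n-2} Δ_j` of the distribution with Fourier
coefficients `c`: the factor that multiplies `Δ_n` in a paraproduct. -/
def lowFreq (n : ℤ) (c : (Fin 3 → ℤ) → ℂ) : TrigPoly (Fin 3 → ℤ) :=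
  ∑ j ∈ Finset.Icc (-1) (n - 2), hρ.block j c

lemma norm_latE_mem_of_blockSymbol_sub_ne_zero {j : ℤ} {l : Fin 3 → ℤ} (hjn : j + 2 ≤ n)
    (hl : blockSymbol ρ j l ≠ 0) (hkl : blockSymbol ρ n (k - l) ≠ 0) :
    ‖latE k‖ ∈ Ico (1 / 12 * (2 : ℝ) ^ n) (4 * (2 : ℝ) ^ n) := by
  have hj := hρ.neg_one_le_of_blockSymbol_ne_zero hl
  have hlow := hρ.norm_latE_lt_of_blockSymbol_ne_zero hl
  obtain ⟨hhigh, hhigh'⟩ := hρ.norm_latE_mem_of_blockSymbol_ne_zero (by omega) hkl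
  rw [map_sub] at hhigh hhigh'
  have hgap : (2 : ℝ) ^ j * 4 ≤ 2 ^ n := by
    calc (2 : ℝ) ^ j * 4 = 2 ^ (j + 2) := by rw [zpow_add₀ (by norm_num)]; norm_num
      _ ≤ 2 ^ n := zpow_le_zpow_right₀ (by norm_num) hjn
  have hupper := norm_sub_norm_le (latE k) (latE l)
  have hlower := norm_sub_le (latE k) (latE l)
  have h2n : (0 : ℝ) < 2 ^ n := by positivity
  constructor <;> linarith

lemma index_mem_of_norm_latE_mem (hn : 1 ≤ n) (hm : blockSymbol ρ m k ≠ 0)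
    (hk : ‖latE k‖ ∈ Ico (1 / 12 * (2 : ℝ) ^ n) (4 * (2 : ℝ) ^ n)) :
    n ∈ Finset.Icc (max 1 (m - 4)) (m + 4) := by
  have hm' := hρ.norm_latE_lt_of_blockSymbol_ne_zero hm
  have h2n : (0 : ℝ) < 2 ^ n := by positivity
  have hupper : n < m + 5 := by
    refine (zpow_lt_zpow_iff_right₀ (one_lt_two (α := ℝ))).1 ?_
    rw [zpow_add₀ (by norm_num)]
    norm_num
    linarith [hk.1]
  have hlower : m - 4 ≤ n := by
    by_contra! hlt
    have hpow : (2 : ℝ) ^ n * 16 ≤ 2 ^ m := by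
      calc (2 : ℝ) ^ n * 16 = 2 ^ (n + 4) := by rw [zpow_add₀ (by norm_num)]; norm_num
        _ ≤ 2 ^ m := zpow_le_zpow_right₀ (by norm_num) (by omega)
    linarith [hk.2, (hρ.norm_latE_mem_of_blockSymbol_ne_zero (by omega) hm).1]
  rw [Finset.mem_Icc]
  omega

variable {c d : (Fin 3 → ℤ) → ℂ}

lemma norm_latE_mem_of_coeff_lowFreq_mul_block_ne_zero
    (h : (hρ.lowFreq n c * hρ.block n d).coeff k ≠ 0) :
    ‖latE k‖ ∈ Icc (1 / 12 * (2 : ℝ) ^ n) (4 * (2 : ℝ) ^ n) := by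
  rw [lowFreq, Finset.sum_mul, AddMonoidAlgebra.coeff_sum, Finsupp.finsetSum_apply] at h
  obtain ⟨j, hj, hne⟩ := Finset.exists_ne_zero_of_sum_ne_zero h
  obtain ⟨l, hl, hkl⟩ := exists_coeff_ne_zero_of_coeff_mul_ne_zero hne
  have hjn : j + 2 ≤ n := by linarith [(Finset.mem_Icc.1 hj).2]
  exact Ico_subset_Icc_self (hρ.norm_latE_mem_of_blockSymbol_sub_ne_zero hjn
    (left_ne_zero_of_mul hl) (left_ne_zero_of_mul hkl))

lemma norm_latE_mem_of_coeff_block_ne_zero (hn : 0 ≤ n) (h : (hρ.block n d).coeff k ≠ 0) :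
    ‖latE k‖ ∈ Icc (1 / 12 * (2 : ℝ) ^ n) (4 * (2 : ℝ) ^ n) := by
  obtain ⟨hlow, hhigh⟩ := hρ.norm_latE_mem_of_blockSymbol_ne_zero hn (left_ne_zero_of_mul h)
  have h2n : (0 : ℝ) < 2 ^ n := by positivity
  constructor <;> linarith

lemma mem_dyadicBall_of_blockSymbol_ne_zero {M : ℤ} (hm : m ≤ M) (h : blockSymbol ρ m k ≠ 0) :
    k ∈ dyadicBall M := by
  rw [dyadicBall, Finite.mem_toFinset]
  refine (hρ.norm_latE_lt_of_blockSymbol_ne_zero h).trans_le ?_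
  gcongr
  norm_num

lemma coeff_block_mul_block {M j : ℤ} (hj : j ≤ M) (k : Fin 3 → ℤ) :
    (hρ.block j c * hρ.block n d).coeff k =
      ∑ l ∈ dyadicBall M, blockSymbol ρ j l * c l * (blockSymbol ρ n (k - l) * d (k - l)) :=
  coeff_mul_eq_sum (fun _ hl => hρ.mem_dyadicBall_of_blockSymbol_ne_zero hj
    (left_ne_zero_of_mul (Finsupp.mem_support_iff.1 hl))) k

lemma coeff_lowFreq_mul_block {M : ℤ} (hn : n ≤ M + 2) (k : Fin 3 → ℤ) :
    (hρ.lowFreq n c * hρ.block n d).coeff k =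
      ∑ j ∈ Finset.Icc (-1) M, ∑ l ∈ dyadicBall M, if j + 2 ≤ n then
        blockSymbol ρ j l * c l * (blockSymbol ρ n (k - l) * d (k - l)) else 0 := by
  rw [lowFreq, Finset.sum_mul, AddMonoidAlgebra.coeff_sum, Finsupp.finsetSum_apply,
    ← Finset.sum_subset (Finset.Icc_subset_Icc_right (show n - 2 ≤ M by omega))]
  · refine Finset.sum_congr rfl fun j hj => ?_
    rw [Finset.mem_Icc] at hj
    rw [hρ.coeff_block_mul_block (show j ≤ M by omega)]
    exact Finset.sum_congr rfl fun l _ => (if_pos (by omega)).symm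
  · intro j hj hjn
    rw [Finset.mem_Icc] at hj hjn
    exact Finset.sum_eq_zero fun l _ => if_neg (by omega)

lemma paraCoeff_eq_sum (hm : blockSymbol ρ m k ≠ 0) (c d : (Fin 3 → ℤ) → ℂ) :
    paraCoeff ρ c d k = ∑ n ∈ Finset.Icc (max 1 (m - 4)) (m + 4),
      (hρ.lowFreq n c * hρ.block n d).coeff k := by
  let F : ℤ × ℤ × (Fin 3 → ℤ) → ℂ := fun p =>
    if -1 ≤ p.1 ∧ p.1 + 2 ≤ p.2.1 then
      blockSymbol ρ p.1 p.2.2 * c p.2.2 * (blockSymbol ρ p.2.1 (k - p.2.2) * d (k - p.2.2))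
    else 0
  have hF : paraCoeff ρ c d k = ∑' p, F p :=
    tsum_congr fun p => by simp only [F, blockSymbol, mul_assoc]
  have hsupport : ∀ p ∉ Finset.Icc (-1) (m + 2) ×ˢ Finset.Icc (max 1 (m - 4)) (m + 4) ×ˢ
      dyadicBall (m + 2), F p = 0 := by
    rintro ⟨j, n, l⟩ hp
    by_contra hne
    obtain ⟨hj, hjn⟩ : -1 ≤ j ∧ j + 2 ≤ n := by_contra fun h => hne (if_neg h)
    simp only [F, if_pos (And.intro hj hjn)] at hne
    have hl := left_ne_zero_of_mul (left_ne_zero_of_mul hne)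
    have hkl := left_ne_zero_of_mul (right_ne_zero_of_mul hne)
    have hn := hρ.index_mem_of_norm_latE_mem (by omega) hm
      (hρ.norm_latE_mem_of_blockSymbol_sub_ne_zero hjn hl hkl)
    have hjm : j ≤ m + 2 := by linarith [(Finset.mem_Icc.1 hn).2]
    exact hp (Finset.mem_product.2 ⟨Finset.mem_Icc.2 ⟨hj, hjm⟩,
      Finset.mem_product.2 ⟨hn, hρ.mem_dyadicBall_of_blockSymbol_ne_zero hjm hl⟩⟩)
  rw [hF, tsum_eq_sum hsupport]
  simp only [Finset.sum_product]
  rw [Finset.sum_comm]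
  refine Finset.sum_congr rfl fun n hn => ?_
  rw [hρ.coeff_lowFreq_mul_block (show n ≤ m + 2 + 2 by linarith [(Finset.mem_Icc.1 hn).2])]
  refine Finset.sum_congr rfl fun j hj => Finset.sum_congr rfl fun l _ => ?_
  simp only [F, (Finset.mem_Icc.1 hj).1, true_and]

end IsDyadicPartition

/-- The Fourier coefficients of `[σ(D), u ≺] v`, in terms of those of `u` and `v`. -/
def paraCommutator (ρ : ℤ → (Fin 3 → ℝ) → ℝ) (σ c d : (Fin 3 → ℤ) → ℂ) :
    (Fin 3 → ℤ) → ℂ :=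
  fun k => σ k * paraCoeff ρ c d k - paraCoeff ρ c (fun k' => σ k' * d k') k

namespace IsDyadicPartition

variable {ρ : ℤ → (Fin 3 → ℝ) → ℝ} (hρ : IsDyadicPartition ρ)

include hρ

lemma block_paraCommutator (m : ℤ) (σ c d : (Fin 3 → ℤ) → ℂ) :
    hρ.block m (paraCommutator ρ σ c d) =
      multiplier (blockSymbol ρ m) (∑ n ∈ Finset.Icc (max 1 (m - 4)) (m + 4),
        commutator σ (hρ.lowFreq n c) (hρ.block n d)) := by
  ext k
  rw [coeff_block, coeff_multiplier]
  by_cases hm : blockSymbol ρ m k = 0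
  · rw [hm, zero_mul, zero_mul]
  · simp only [paraCommutator, hρ.paraCoeff_eq_sum hm, block_mul, Finset.mul_sum,
      ← Finset.sum_sub_distrib, AddMonoidAlgebra.coeff_sum, Finsupp.finsetSum_apply,
      TrigPoly.commutator, AddMonoidAlgebra.coeff_sub, Finsupp.sub_apply, coeff_multiplier]

end IsDyadicPartition

lemma fourierMode_eq_fourierChar_inner (k : Fin 3 → ℤ) (x : Fin 3 → ℝ) :
    fourierMode k x = 𝐞 (inner ℝ (WithLp.toLp 2 x) (latE k)) := by
  rw [fourierMode, Real.fourierChar_apply]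
  congr 1
  simp only [latE, latR, AddMonoidHom.coe_mk, ZeroHom.coe_mk, PiLp.inner_apply, RCLike.inner_apply,
    conj_trivial]
  push_cast
  ring

lemma ofReal_two_rpow_mul_two_rpow_neg (s : ℝ) :
    ENNReal.ofReal (2 ^ s) * ENNReal.ofReal (2 ^ (-s)) = 1 := by
  rw [← ENNReal.ofReal_mul (by positivity), ← Real.rpow_add two_pos, add_neg_cancel,
    Real.rpow_zero, ENNReal.ofReal_one]

lemma sum_Icc_two_rpow_mul_le {κ : ℝ} (hκ : 0 < κ) (a n : ℤ) :
    ∑ j ∈ Finset.Icc a n, (2 : ℝ) ^ (j * κ) ≤ 2 ^ (n * κ) * (1 - 2 ^ (-κ))⁻¹ := by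
  have hr : 0 < 1 - (2 : ℝ) ^ (-κ) :=
    sub_pos.2 (Real.rpow_lt_one_of_one_lt_of_neg one_lt_two (by linarith))
  rcases lt_or_ge n a with h | h
  · rw [Finset.Icc_eq_empty (by omega), Finset.sum_empty]
    positivity
  induction n, h using Int.leInduction with
  | base =>
    rw [Finset.Icc_self, Finset.sum_singleton]
    exact le_mul_of_one_le_right (by positivity)
      (one_le_inv₀ hr |>.2 (sub_le_self _ (by positivity)))
  | succ n h ih =>
    have hinsert : Finset.Icc a (n + 1) = insert (n + 1) (Finset.Icc a n) :=
      (Finset.insert_Icc_right_eq_Icc_succ (h.trans (Order.le_succ n))).symm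
    rw [hinsert, Finset.sum_insert (by simp)]
    have hstep : (2 : ℝ) ^ (n * κ) = 2 ^ ((n + 1 : ℤ) * κ) * 2 ^ (-κ) := by
      rw [← Real.rpow_add two_pos]
      push_cast
      ring_nf
    calc _ ≤ (2 : ℝ) ^ ((n + 1 : ℤ) * κ) + 2 ^ (n * κ) * (1 - 2 ^ (-κ))⁻¹ := by gcongr
      _ = 2 ^ ((n + 1 : ℤ) * κ) * (1 - 2 ^ (-κ))⁻¹ := by
        rw [hstep]
        field_simp
        ring

lemma two_rpow_neg_mul_le_of_abs_sub_le {m n : ℤ} {N : ℝ} (h : |(n - m : ℝ)| ≤ N) (ω : ℝ) :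
    (2 : ℝ) ^ (-(n * ω)) ≤ 2 ^ (N * |ω|) * 2 ^ (-(m * ω)) := by
  rw [← Real.rpow_add two_pos]
  refine Real.rpow_le_rpow_of_exponent_le one_le_two ?_
  have hle : -((n - m) * ω) ≤ N * |ω| :=
    (neg_le_abs _).trans (by rw [abs_mul]; gcongr)
  linarith

namespace IsDyadicPartition

variable {ρ : ℤ → (Fin 3 → ℝ) → ℝ} (hρ : IsDyadicPartition ρ)

include hρ

lemma toBCF_block_apply (m : ℤ) (c : (Fin 3 → ℤ) → ℂ) (x : Fin 3 → ℝ) :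
    toBCF latE (hρ.block m c) (WithLp.toLp 2 x) = LPblock ρ m c x := by
  rw [toBCF_apply, LPblock, tsum_eq_sum (s := (hρ.block m c).coeff.support)]
  · exact Finset.sum_congr rfl fun k _ => by
      rw [fourierMode_eq_fourierChar_inner, coeff_block, blockSymbol]
  · intro k hk
    rw [Finsupp.notMem_support_iff, coeff_block] at hk
    exact mul_eq_zero_of_left hk _

lemma supNormE_LPblock (m : ℤ) (c : (Fin 3 → ℤ) → ℂ) :
    supNormE (LPblock ρ m c) = ‖toBCF latE (hρ.block m c)‖ₑ := by
  rw [BoundedContinuousFunction.enorm_eq_iSup_enorm]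
  exact (WithLp.equiv 2 (Fin 3 → ℝ)).symm.iSup_congr fun x => by
    rw [← hρ.toBCF_block_apply]
    rfl

lemma enorm_toBCF_block_le {m : ℤ} (hm : -1 ≤ m) (α : ℝ) (c : (Fin 3 → ℤ) → ℂ) :
    ‖toBCF latE (hρ.block m c)‖ₑ ≤ ENNReal.ofReal (2 ^ (-(m * α))) * besovNorm ρ α c := by
  have hle : ENNReal.ofReal (2 ^ (m * α)) * ‖toBCF latE (hρ.block m c)‖ₑ ≤ besovNorm ρ α c :=
    le_iSup_of_le m (by rw [if_pos hm, hρ.supNormE_LPblock])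
  calc _ = ENNReal.ofReal (2 ^ (-(m * α))) *
        (ENNReal.ofReal (2 ^ (m * α)) * ‖toBCF latE (hρ.block m c)‖ₑ) := by
        rw [← mul_assoc, mul_comm (ENNReal.ofReal _), ofReal_two_rpow_mul_two_rpow_neg, one_mul]
    _ ≤ _ := by gcongr

lemma besovNorm_le {α : ℝ} {c : (Fin 3 → ℤ) → ℂ} {B : ℝ≥0∞}
    (h : ∀ m : ℤ, ‖toBCF latE (hρ.block m c)‖ₑ ≤ ENNReal.ofReal (2 ^ (-(m * α))) * B) :
    besovNorm ρ α c ≤ B := by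
  refine iSup_le fun m => ?_
  split_ifs
  · calc _ ≤ ENNReal.ofReal (2 ^ (m * α)) * (ENNReal.ofReal (2 ^ (-(m * α))) * B) := by
          rw [hρ.supNormE_LPblock]
          gcongr
          exact h m
      _ = B := by rw [← mul_assoc, ofReal_two_rpow_mul_two_rpow_neg, one_mul]
  · exact zero_le

lemma exists_lipschitzWith_block : ∃ K : ℝ≥0, ∀ (m : ℤ) (c : (Fin 3 → ℤ) → ℂ),
    LipschitzWith (K * 2 ^ m * ‖toBCF latE (hρ.block m c)‖₊) (toBCF latE (hρ.block m c)) := by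
  obtain ⟨K, hK⟩ := bernstein_inequality latE
  refine ⟨K * (8 / 3), fun m c => ?_⟩
  have hradius : (8 / 3 * 2 ^ m : ℝ).toNNReal = 8 / 3 * 2 ^ m := by
    rw [Real.toNNReal_mul (by norm_num), Real.toNNReal_div (by norm_num),
      Real.toNNReal_zpow two_pos.le]
    simp only [Real.toNNReal_ofNat]
  rw [mul_assoc K, ← hradius]
  exact hK _ _ (by positivity) fun k hk =>
    (hρ.norm_latE_lt_of_blockSymbol_ne_zero (left_ne_zero_of_mul hk)).le

lemma exists_lipschitzWith_lowFreq {α : ℝ} (hα : α < 1) :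
    ∃ K : ℝ, 0 ≤ K ∧ ∀ (n : ℤ) (c : (Fin 3 → ℤ) → ℂ), ∃ L : ℝ≥0,
      LipschitzWith L (toBCF latE (hρ.lowFreq n c)) ∧
        (L : ℝ≥0∞) ≤ ENNReal.ofReal (K * 2 ^ (n * (1 - α))) * besovNorm ρ α c := by
  obtain ⟨K, hK⟩ := hρ.exists_lipschitzWith_block
  have hgeom : 0 ≤ (1 - (2 : ℝ) ^ (-(1 - α)))⁻¹ := inv_nonneg.2 <| sub_nonneg.2 <|
    Real.rpow_le_one_of_one_le_of_nonpos one_le_two (by linarith)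
  refine ⟨K * (1 - 2 ^ (-(1 - α)))⁻¹, by positivity, fun n c =>
    ⟨_, lipschitzWith_toBCF_sum latE fun j _ => hK j c, ?_⟩⟩
  have hblock : ∀ j ∈ Finset.Icc (-1) (n - 2),
      ((K * 2 ^ j * ‖toBCF latE (hρ.block j c)‖₊ : ℝ≥0) : ℝ≥0∞) ≤
        ENNReal.ofReal (K * 2 ^ (j * (1 - α))) * besovNorm ρ α c := fun j hj => by
    have hj' : -1 ≤ j := (Finset.mem_Icc.1 hj).1
    have hpow : ((K * 2 ^ j : ℝ≥0) : ℝ≥0∞) * ENNReal.ofReal (2 ^ (-(j * α))) =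
        ENNReal.ofReal (K * 2 ^ (j * (1 - α))) := by
      rw [← ENNReal.ofReal_coe_nnreal, ← ENNReal.ofReal_mul (by positivity), NNReal.coe_mul,
        NNReal.coe_zpow, NNReal.coe_ofNat, mul_assoc, ← Real.rpow_intCast, ← Real.rpow_add two_pos]
      ring_nf
    rw [ENNReal.coe_mul, ← hpow, mul_assoc]
    gcongr
    exact hρ.enorm_toBCF_block_le hj' α c
  calc _ ≤ ∑ j ∈ Finset.Icc (-1) (n - 2),
        ENNReal.ofReal (K * 2 ^ (j * (1 - α))) * besovNorm ρ α c := by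
        rw [ENNReal.ofNNReal_finsetSum]
        exact Finset.sum_le_sum hblock
    _ = ENNReal.ofReal (K * ∑ j ∈ Finset.Icc (-1) (n - 2), 2 ^ (j * (1 - α))) *
        besovNorm ρ α c := by
        rw [← Finset.sum_mul, ← ENNReal.ofReal_sum_of_nonneg fun _ _ => by positivity,
          Finset.mul_sum]
    _ ≤ _ := by
        rw [mul_assoc, mul_comm _⁻¹]
        gcongr
        refine (sum_Icc_two_rpow_mul_le (by linarith) _ _).trans ?_
        gcongr
        · exact one_le_two
        · linarith

lemma enorm_commutator_lowFreq_block_le {A s : ℝ} (hA : 0 ≤ A) {σ : (Fin 3 → ℤ) → ℂ}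
    (hσ : HasAnnularCommutatorBound latE (1 / 12) 4 (fun R => A * R ^ s) σ) {n : ℤ} (hn : 0 ≤ n)
    {c : (Fin 3 → ℤ) → ℂ} {L : ℝ≥0} (hL : LipschitzWith L (toBCF latE (hρ.lowFreq n c)))
    (d : (Fin 3 → ℤ) → ℂ) :
    ‖toBCF latE (TrigPoly.commutator σ (hρ.lowFreq n c) (hρ.block n d))‖ₑ ≤
      ENNReal.ofReal (A * 2 ^ (n * s)) * L * ‖toBCF latE (hρ.block n d)‖ₑ := by
  have hnorm : _ ≤ A * ((2 : ℝ) ^ n) ^ s * _ * _ :=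
    hσ (g := hρ.block n d) (by positivity) hL
      (fun _ => hρ.norm_latE_mem_of_coeff_block_ne_zero hn)
      fun _ => hρ.norm_latE_mem_of_coeff_lowFreq_mul_block_ne_zero
  rw [← Real.rpow_intCast, ← Real.rpow_mul two_pos.le] at hnorm
  rw [← ofReal_norm, ← ofReal_norm, ← ENNReal.ofReal_coe_nnreal,
    ← ENNReal.ofReal_mul (by positivity), ← ENNReal.ofReal_mul (by positivity)]
  exact ENNReal.ofReal_le_ofReal hnorm

lemma exists_enorm_commutator_lowFreq_block_le {α : ℝ} (hα : α < 1) (β κ : ℝ) :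
    ∃ K : ℝ, 0 ≤ K ∧ ∀ {A : ℝ}, 0 ≤ A → ∀ {σ : (Fin 3 → ℤ) → ℂ},
      HasAnnularCommutatorBound latE (1 / 12) 4 (fun R => A * R ^ (-(1 + κ))) σ →
      ∀ {n : ℤ}, 0 ≤ n → ∀ c d : (Fin 3 → ℤ) → ℂ,
        ‖toBCF latE (TrigPoly.commutator σ (hρ.lowFreq n c) (hρ.block n d))‖ₑ ≤
          ENNReal.ofReal (K * A * 2 ^ (-(n * (α + β + κ)))) *
            (besovNorm ρ α c * besovNorm ρ β d) := by
  obtain ⟨K, hK, hlip⟩ := hρ.exists_lipschitzWith_lowFreq hα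
  refine ⟨K, hK, fun {A} hA {σ} hσ {n} hn c d => ?_⟩
  obtain ⟨L, hL, hLle⟩ := hlip n c
  have hpow : A * 2 ^ (n * (-(1 + κ))) * (K * 2 ^ (n * (1 - α))) * (2 : ℝ) ^ (-(n * β)) =
      K * A * 2 ^ (-(n * (α + β + κ))) := by
    have hadd : (2 : ℝ) ^ (-(n * (α + β + κ))) =
        2 ^ (n * (-(1 + κ))) * 2 ^ (n * (1 - α)) * 2 ^ (-(n * β)) := by
      rw [← Real.rpow_add two_pos, ← Real.rpow_add two_pos]
      ring_nf
    rw [hadd]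
    ring
  calc _ ≤ ENNReal.ofReal (A * 2 ^ (n * (-(1 + κ)))) * L * ‖toBCF latE (hρ.block n d)‖ₑ :=
        hρ.enorm_commutator_lowFreq_block_le hA hσ hn hL d
    _ ≤ ENNReal.ofReal (A * 2 ^ (n * (-(1 + κ)))) *
          (ENNReal.ofReal (K * 2 ^ (n * (1 - α))) * besovNorm ρ α c) *
          (ENNReal.ofReal (2 ^ (-(n * β))) * besovNorm ρ β d) := by
        gcongr
        exact hρ.enorm_toBCF_block_le (by omega) β d
    _ = _ := by
        rw [← hpow, ENNReal.ofReal_mul' (q := 2 ^ (-(n * β))) (by positivity),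
          ENNReal.ofReal_mul' (q := K * _) (by positivity)]
        ring

lemma exists_besovNorm_paraCommutator_le {α : ℝ} (hα : α < 1) (β κ : ℝ) :
    ∃ C : ℝ, 0 ≤ C ∧ ∀ {A : ℝ}, 0 ≤ A → ∀ {σ : (Fin 3 → ℤ) → ℂ},
      HasAnnularCommutatorBound latE (1 / 12) 4 (fun R => A * R ^ (-(1 + κ))) σ →
      ∀ c d : (Fin 3 → ℤ) → ℂ, besovNorm ρ (α + β + κ) (paraCommutator ρ σ c d) ≤
        ENNReal.ofReal (C * A) * (besovNorm ρ α c * besovNorm ρ β d) := by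
  obtain ⟨K, hK, hterm⟩ := hρ.exists_enorm_commutator_lowFreq_block_le hα β κ
  obtain ⟨M, hM, hblock⟩ := hρ.exists_norm_toBCF_multiplier_blockSymbol_le
  set ω := α + β + κ
  refine ⟨M * (9 * (K * 2 ^ (4 * |ω|))), by positivity, fun {A} hA {σ} hσ c d =>
    hρ.besovNorm_le fun m => ?_⟩
  set X := besovNorm ρ α c * besovNorm ρ β d
  have hn : ∀ n ∈ Finset.Icc (max 1 (m - 4)) (m + 4),
      ‖toBCF latE (TrigPoly.commutator σ (hρ.lowFreq n c) (hρ.block n d))‖ₑ ≤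
        ENNReal.ofReal (K * A * (2 ^ (4 * |ω|) * 2 ^ (-(m * ω)))) * X := fun n hn => by
    rw [Finset.mem_Icc] at hn
    have hdist : |n - m| ≤ 4 := abs_le.2 ⟨by omega, by omega⟩
    refine (hterm hA hσ (by omega) c d).trans ?_
    gcongr
    exact two_rpow_neg_mul_le_of_abs_sub_le (by exact_mod_cast hdist) ω
  have hcard : (Finset.Icc (max 1 (m - 4)) (m + 4)).card ≤ 9 := by
    rw [Int.card_Icc]
    omega
  rw [hρ.block_paraCommutator]
  calc _ ≤ ENNReal.ofReal M * ‖toBCF latE (∑ n ∈ Finset.Icc (max 1 (m - 4)) (m + 4),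
        TrigPoly.commutator σ (hρ.lowFreq n c) (hρ.block n d))‖ₑ := by
        rw [← ofReal_norm, ← ofReal_norm, ← ENNReal.ofReal_mul hM]
        exact ENNReal.ofReal_le_ofReal (hblock m _)
    _ ≤ ENNReal.ofReal M *
        (9 * (ENNReal.ofReal (K * A * (2 ^ (4 * |ω|) * 2 ^ (-(m * ω)))) * X)) := by
        gcongr
        rw [map_sum]
        refine (enorm_sum_le _ _).trans ((Finset.sum_le_card_nsmul _ _ _ hn).trans ?_)
        rw [nsmul_eq_mul]
        gcongr
        exact_mod_cast hcard
    _ = _ := by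
        simp only [← mul_assoc]
        rw [← ENNReal.ofReal_ofNat, ← ENNReal.ofReal_mul hM, ← ENNReal.ofReal_mul (by positivity),
          ← ENNReal.ofReal_mul (by positivity)]
        ring_nf

end IsDyadicPartition

theorem statement12_general {ρ : ℤ → (Fin 3 → ℝ) → ℝ} (hρ : IsDyadicPartition ρ)
    (Φ : 𝓢(EuclideanSpace ℝ (Fin 3), ℂ)) {α δ : ℝ} (hα : α < 1) (β : ℝ) (hδ : 0 ≤ δ) :
    ∃ C : ℝ, 0 < C ∧ ∀ t : ℝ, 0 < t → ∀ z : ℂ, ‖z‖ ≤ 1 → ∀ c d : (Fin 3 → ℤ) → ℂ,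
      besovNorm ρ (α + β + 2 * δ) (paraCommutator ρ (fun k => z * Φ (√t • latE k)) c d) ≤
        ENNReal.ofReal (C * t ^ (-δ)) * besovNorm ρ α c * besovNorm ρ β d := by
  obtain ⟨K, hK, hsymbol⟩ := exists_hasAnnularCommutatorBound_rpow latE Φ
    (a := 1 / 12) (by norm_num) 4 (mul_nonneg zero_le_two hδ)
  obtain ⟨C, hC, hbesov⟩ := hρ.exists_besovNorm_paraCommutator_le hα β (2 * δ)
  refine ⟨C * K + 1, by positivity, fun t ht z hz c d => ?_⟩
  have hpow : √t ^ (-(2 * δ)) = t ^ (-δ) := by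
    rw [Real.sqrt_eq_rpow, ← Real.rpow_mul ht.le]
    ring_nf
  refine (hbesov (by positivity) ((hsymbol (Real.sqrt_pos.2 ht)).smul latE hz) c d).trans ?_
  rw [hpow, ← mul_assoc, ← mul_assoc]
  gcongr
  linarith

lemma norm_latE_sq (k : Fin 3 → ℤ) : ‖latE k‖ ^ 2 = ∑ i, (k i : ℝ) ^ 2 := by
  simp [EuclideanSpace.norm_sq_eq, latE, latR]

lemma re_heatRate_pos {μ : ℝ} (hμ : 0 < μ) :
    0 < (4 * (Real.pi : ℂ) ^ 2 * (Complex.I + μ)).re := by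
  have hreal : 4 * (Real.pi : ℂ) ^ 2 = (4 * Real.pi ^ 2 : ℝ) := by push_cast; ring
  rw [hreal, Complex.re_ofReal_mul, Complex.add_re, Complex.I_re, Complex.ofReal_re, zero_add]
  positivity

-- In `heatMul` the prefactor `t` also multiplies the summand `-t`, so the damping is `e^{-t²}`, not
-- `e^{-t}`; the estimate only uses that it is bounded by `1`.
lemma heatMul_eq {μ t : ℝ} (hμ : 0 < μ) (ht : 0 ≤ t) :
    heatMul μ t = fun k =>
      Real.exp (-t ^ 2) * gaussianSchwartz _ (re_heatRate_pos hμ) (√t • latE k) := by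
  funext k
  rw [gaussianSchwartz_apply, norm_smul, mul_pow, norm_latE_sq,
    Real.norm_of_nonneg (Real.sqrt_nonneg t), Real.sq_sqrt ht, Complex.ofReal_exp,
    ← Complex.exp_add, heatMul]
  push_cast
  ring_nf

lemma norm_ofReal_exp_neg_sq_le_one (t : ℝ) : ‖(Real.exp (-t ^ 2) : ℂ)‖ ≤ 1 := by
  rw [Complex.norm_real, Real.norm_of_nonneg (by positivity), Real.exp_le_one_iff]
  nlinarith

end LittlewoodPaley

/-- commutation between paraproduct and heat semigroup:
`‖P_t(u ≺ v) − u ≺ (P_t v)‖_{C^{α+β+2δ}} ≲ t^{-δ} ‖u‖_{C^α}‖v‖_{C^β}` uniformly in `t > 0`,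
for `α < 1`, `β ∈ ℝ`, `δ ≥ 0`. -/
theorem statement12 (ρ : ℤ → (Fin 3 → ℝ) → ℝ) (hρ : IsDyadicPartition ρ)
    (μ : ℝ) (hμ : 0 < μ) (α β δ : ℝ) (hα : α < 1) (hδ : 0 ≤ δ) :
    ∃ C : ℝ, 0 < C ∧ ∀ t : ℝ, 0 < t → ∀ c d : (Fin 3 → ℤ) → ℂ,
      besovNorm ρ (α + β + 2 * δ)
          (fun k => heatMul μ t k * paraCoeff ρ c d k -
            paraCoeff ρ c (fun k' => heatMul μ t k' * d k') k) ≤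
        ENNReal.ofReal (C * t ^ (-δ)) * besovNorm ρ α c * besovNorm ρ β d := by
  obtain ⟨C, hC, h⟩ := statement12_general hρ (gaussianSchwartz _ (re_heatRate_pos hμ)) hα β hδ
  refine ⟨C, hC, fun t ht => ?_⟩
  rw [heatMul_eq hμ ht.le]
  exact h t ht _ (norm_ofReal_exp_neg_sq_le_one t)
end
end
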